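/- arXiv:0804.0563 — 2 statements merged into one kernel-verified Lean document; each statement's English description precedes it below -/
import Mathlib

section
/- (Identification of the tangentially homogenized density) For every s ∈ M and every ξ ∈ [T_s M]^N, Tf_hom(s,ξ) = g_hom(s,ξ), where g_hom(s,ξ) := lim_{t→∞} inf{ (1/t^N)∫_{(0,t)^N} g(y,s,ξ+∇φ(y)) dy : φ ∈ W^{1,∞}_0((0,t)^N;ℝ^d) } is the usual (unconstrained) homogenized energy density of g(·,s,·). -/
open MeasureTheory Filter Set
open scoped ENNReal RealInnerProductSpace Topology NNReal

noncomputable section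

/-- Euclidean space `ℝ^N`. -/
abbrev EN (N : ℕ) : Type := EuclideanSpace ℝ (Fin N)

/-- `d × N` matrices, viewed as continuous linear maps `ℝ^N → ℝ^d`. -/
abbrev Mat (d N : ℕ) : Type := EN N →L[ℝ] EN d

variable {N d : ℕ}

/-- The tangent set of `M ⊆ ℝ^d` at `s`: velocities of curves in `M` through `s`. -/
def TangentSet (M : Set (EN d)) (s : EN d) : Set (EN d) :=
  {v | ∃ γ : ℝ → EN d, (∀ t, γ t ∈ M) ∧ γ 0 = s ∧ HasDerivAt γ v 0}

/-- A matrix `ξ ∈ ℝ^{d×N}` has all its columns in the tangent space `T_s M`,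
i.e. `ξ ∈ [T_s M]^N`. -/
def TangentCols (M : Set (EN d)) (s : EN d) (ξ : Mat d N) : Prop :=
  ∀ i : Fin N, ξ (EuclideanSpace.single i 1) ∈ TangentSet M s

/-- `T` is a smooth `m`-dimensional submanifold (without boundary) of `ℝ^n`,
described locally as a regular level set. -/
def IsSubmanifoldDim (n m : ℕ) (T : Set (EN n)) : Prop :=
  ∀ x ∈ T, ∃ (U : Set (EN n)) (F : EN n → EN (n - m)),
    IsOpen U ∧ x ∈ U ∧ ContDiffOn ℝ (⊤ : ℕ∞) F U ∧
    (T ∩ U = {y ∈ U | F y = 0}) ∧ ∀ y ∈ U, Function.Surjective (fderiv ℝ F y)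

/-- `M` is a nonempty compact connected smooth submanifold of `ℝ^d` without boundary. -/
def IsNiceManifold (d : ℕ) (M : Set (EN d)) : Prop :=
  M.Nonempty ∧ IsCompact M ∧ IsConnected M ∧ ∃ m : ℕ, m ≤ d ∧ IsSubmanifoldDim d m M

/-- A finite union of subsets of `(N-2)`-dimensional submanifolds of `ℝ^N`. -/
def IsSigmaSet (N : ℕ) (Sg : Set (EN N)) : Prop :=
  ∃ (k : ℕ) (S : Fin k → Set (EN N)), Sg = ⋃ i, S i ∧
    ∀ i, ∃ T : Set (EN N), IsSubmanifoldDim N (N - 2) T ∧ S i ⊆ T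

/-- `u ∈ W^{1,1}(A;ℝ^d)` with weak gradient `Du`. -/
def MemW11 (A : Set (EN N)) (u : EN N → EN d) (Du : EN N → Mat d N) : Prop :=
  IntegrableOn u A volume ∧ IntegrableOn Du A volume ∧
    ∀ φ : EN N → ℝ, ContDiff ℝ (⊤ : ℕ∞) φ → HasCompactSupport φ → tsupport φ ⊆ A →
      ∀ y : EN N, ∫ x in A, fderiv ℝ φ x y • u x = - ∫ x in A, φ x • Du x y

/-- `u` takes values in `M` almost everywhere on `A`. -/
def AeIn (A : Set (EN N)) (u : EN N → EN d) (M : Set (EN d)) : Prop :=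
  ∀ᵐ x ∂(volume.restrict A), u x ∈ M

/-- Recession function of `h : ℝ^{d×N} → ℝ`: `h^∞(ξ) = limsup_{t→∞} h(tξ)/t`. -/
def recc (h : Mat d N → ℝ) (ξ : Mat d N) : ℝ :=
  Filter.limsup (fun t : ℝ => h (t • ξ) / t) Filter.atTop

/-- The open cube `(0,t)^N`. -/
def posCube (N : ℕ) (t : ℝ) : Set (EN N) := {x | ∀ i, x i ∈ Set.Ioo (0 : ℝ) t}

/-- The open unit cube `(-1/2,1/2)^N`. -/
def unitCube (N : ℕ) : Set (EN N) := {x | ∀ i, x i ∈ Set.Ioo (-(1/2) : ℝ) (1/2)}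

/-- The cell infimum over `W^{1,∞}_0((0,t)^N; T_s M)` defining `Tf_hom`. -/
def tanCell (f : EN N → Mat d N → ℝ) (M : Set (EN d)) (s : EN d) (ξ : Mat d N)
    (t : ℝ) : ℝ :=
  sInf {c : ℝ | ∃ (φ : EN N → EN d) (K : ℝ≥0), LipschitzWith K φ ∧
    (∀ x, φ x ∈ TangentSet M s) ∧ (∀ x, x ∉ posCube N t → φ x = 0) ∧
    c = (t ^ N)⁻¹ * ∫ x in posCube N t, f x (ξ + fderiv ℝ φ x)}

/-- The tangentially homogenized density `Tf_hom` (the limit as `t → ∞`,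
realized as a limsup). -/
def Tfhom (f : EN N → Mat d N → ℝ) (M : Set (EN d)) (s : EN d) (ξ : Mat d N) : ℝ :=
  Filter.limsup (fun t => tanCell f M s ξ t) Filter.atTop

/-- The unconstrained cell infimum over `W^{1,∞}_0((0,t)^N; ℝ^d)`. -/
def freeCell (h : EN N → Mat d N → ℝ) (ξ : Mat d N) (t : ℝ) : ℝ :=
  sInf {c : ℝ | ∃ (φ : EN N → EN d) (K : ℝ≥0), LipschitzWith K φ ∧
    (∀ x, x ∉ posCube N t → φ x = 0) ∧
    c = (t ^ N)⁻¹ * ∫ x in posCube N t, h x (ξ + fderiv ℝ φ x)}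

/-- The usual homogenized density of a parametrized integrand `g(y,s,ξ)`. -/
def ghomOf (g : EN N → EN d → Mat d N → ℝ) (s : EN d) (ξ : Mat d N) : ℝ :=
  Filter.limsup (fun t => freeCell (fun y => g y s) ξ t) Filter.atTop

/-- The open cube of side `t` centered at the origin adapted to the
orthonormal basis `B`. -/
def obCube (B : OrthonormalBasis (Fin N) ℝ (EN N)) (t : ℝ) : Set (EN N) :=
  {x | ∀ i, ⟪x, B i⟫ ∈ Set.Ioo (-(t / 2)) (t / 2)}

/-- Surface cell infimum at scale `t`: infimum of `t^{1-N} ∫_{tQ_ν} h(y,∇φ)` over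
`φ ∈ W^{1,1}(tQ_ν;M)` with `φ = a` on `∂(tQ_ν) ∩ {x·ν₁ > 0}` and `φ = b`
on `∂(tQ_ν) ∩ {x·ν₁ ≤ 0}`. -/
def surfCell (h : EN N → Mat d N → ℝ) (M : Set (EN d)) (a b : EN d) (ν₁ : EN N)
    (B : OrthonormalBasis (Fin N) ℝ (EN N)) (t : ℝ) : ℝ :=
  sInf {c : ℝ | ∃ (φ : EN N → EN d) (Dφ : EN N → Mat d N),
    MemW11 (obCube B t) φ Dφ ∧ AeIn (obCube B t) φ M ∧
    (∀ x ∈ frontier (obCube B t),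
      (0 < ⟪x, ν₁⟫ → φ x = a) ∧ (⟪x, ν₁⟫ ≤ 0 → φ x = b)) ∧
    c = (t ^ (N - 1))⁻¹ * ∫ x in obCube B t, h x (Dφ x)}

/-- Surface cell infimum where moreover the adapted cube is chosen with two of
its faces orthogonal to `ν₁`. -/
def thetaCell (h : EN N → Mat d N → ℝ) (M : Set (EN d)) (a b : EN d) (ν₁ : EN N)
    (t : ℝ) : ℝ :=
  sInf {c : ℝ | ∃ B : OrthonormalBasis (Fin N) ℝ (EN N), (∃ i, B i = ν₁) ∧
    c = surfCell h M a b ν₁ B t}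

/-- The homogenized surface energy density `θ_hom` (built from `f^∞`). -/
def thetaHom (f : EN N → Mat d N → ℝ) (M : Set (EN d)) (a b : EN d) (ν₁ : EN N) : ℝ :=
  Filter.limsup (fun t => thetaCell (fun y => recc (f y)) M a b ν₁ t) Filter.atTop

/-- Strong `L¹(A;ℝ^d)`-convergence of a family `v ε → u` as `ε → 0⁺`. -/
def TendstoL1 (A : Set (EN N)) (v : ℝ → EN N → EN d) (u : EN N → EN d) : Prop :=
  Filter.Tendsto (fun ε => ∫ x in A, ‖v ε x - u x‖) (nhdsWithin 0 (Set.Ioi 0)) (nhds 0)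

/-- Γ-convergence as `ε → 0⁺` of the family `Fε` at the point `u`
(for the strong `L¹(A)`-topology) to the value `c`. -/
def GammaConvergesAt (Fε : ℝ → (EN N → EN d) → ℝ≥0∞) (A : Set (EN N))
    (u : EN N → EN d) (c : ℝ≥0∞) : Prop :=
  (∀ v : ℝ → EN N → EN d, TendstoL1 A v u →
      c ≤ Filter.liminf (fun ε => Fε ε (v ε)) (nhdsWithin 0 (Set.Ioi 0))) ∧
  (∃ v : ℝ → EN N → EN d, TendstoL1 A v u ∧
      Filter.limsup (fun ε => Fε ε (v ε)) (nhdsWithin 0 (Set.Ioi 0)) ≤ c)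

/-- The localized functional `F_ε(u,A) = ∫_A f(x/ε,∇u) dx` if
`u ∈ W^{1,1}(A;M)`, and `+∞` otherwise. -/
def FepsSet (f : EN N → Mat d N → ℝ) (M : Set (EN d)) (ε : ℝ) (u : EN N → EN d)
    (A : Set (EN N)) : ℝ≥0∞ :=
  ⨅ (Du : EN N → Mat d N) (_ : MemW11 A u Du ∧ AeIn A u M),
    ENNReal.ofReal (∫ x in A, f (ε⁻¹ • x) (Du x))

/-- The localized Γ-lower limit
`F(u,A) = inf { liminf_n F_{ε_n}(u_n,A) : u_n → u in L¹(A) }`. -/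
def GammaLow (f : EN N → Mat d N → ℝ) (M : Set (EN d)) (εseq : ℕ → ℝ)
    (u : EN N → EN d) (A : Set (EN N)) : ℝ≥0∞ :=
  ⨅ (v : ℕ → EN N → EN d)
    (_ : Filter.Tendsto (fun n => ∫ x in A, ‖v n x - u x‖) Filter.atTop (nhds 0)),
    Filter.liminf (fun n => FepsSet f M (εseq n) (v n) A) Filter.atTop

/-- Extension of `F(u,·)` to arbitrary sets `B ⊆ Ω` by outer regularity. -/
def GammaLowB (f : EN N → Mat d N → ℝ) (M : Set (EN d)) (εseq : ℕ → ℝ)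
    (u : EN N → EN d) (Ω B : Set (EN N)) : ℝ≥0∞ :=
  ⨅ (A : Set (EN N)) (_ : IsOpen A ∧ A ⊆ Ω ∧ B ⊆ A), GammaLow f M εseq u A

/-- A package certifying `u ∈ BV(Ω;ℝ^d)`, with all its measure-theoretic
attributes: absolutely continuous gradient `grad = ∇u`, approximate
discontinuity (jump) set `S`, traces `up = u⁺`, `um = u⁻`, normal `nu = ν_u`,
approximate limit `ap = ũ`, Cantor part `cm = |D^c u|` with polar density
`cd = dD^cu/d|D^cu|`. -/
structure BVPack (Ω : Set (EN N)) (u : EN N → EN d) where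
  grad : EN N → Mat d N
  S : Set (EN N)
  up : EN N → EN d
  um : EN N → EN d
  nu : EN N → EN N
  ap : EN N → EN d
  cm : Measure (EN N)
  cd : EN N → Mat d N
  integrable : IntegrableOn u Ω volume
  grad_int : IntegrableOn grad Ω volume
  S_meas : MeasurableSet S
  cm_fin : cm Set.univ ≠ ⊤
  cm_in : cm Ωᶜ = 0
  jump_int : IntegrableOn (fun x => ‖up x - um x‖) (Ω ∩ S) (μH[(N : ℝ) - 1])
  nu_unit : ∀ x ∈ S, ‖nu x‖ = 1
  jump_ne : ∀ x ∈ S, up x ≠ um x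
  cd_unit : ∀ᵐ x ∂cm, ‖cd x‖ = 1
  cm_sing : cm ⟂ₘ (volume : Measure (EN N))
  cm_nojump : cm S = 0
  ap_lim : ∀ x ∈ Ω \ S,
    Filter.Tendsto
      (fun r : ℝ => (volume (Metric.ball x r)).toReal⁻¹ *
        ∫ y in Metric.ball x r, ‖u y - ap x‖)
      (nhdsWithin 0 (Set.Ioi 0)) (nhds 0)
  jump_lim_up : ∀ x ∈ Ω ∩ S,
    Filter.Tendsto
      (fun r : ℝ => (volume (Metric.ball x r)).toReal⁻¹ *
        ∫ y in {y ∈ Metric.ball x r | 0 < ⟪y - x, nu x⟫}, ‖u y - up x‖)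
      (nhdsWithin 0 (Set.Ioi 0)) (nhds 0)
  jump_lim_um : ∀ x ∈ Ω ∩ S,
    Filter.Tendsto
      (fun r : ℝ => (volume (Metric.ball x r)).toReal⁻¹ *
        ∫ y in {y ∈ Metric.ball x r | ⟪y - x, nu x⟫ < 0}, ‖u y - um x‖)
      (nhdsWithin 0 (Set.Ioi 0)) (nhds 0)
  decomp : ∀ φ : EN N → ℝ, ContDiff ℝ (⊤ : ℕ∞) φ → HasCompactSupport φ → tsupport φ ⊆ Ω →
    ∀ y : EN N,
      ∫ x in Ω, fderiv ℝ φ x y • u x =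
        -(∫ x in Ω, φ x • grad x y) - (∫ x, φ x • cd x y ∂cm) -
          ∫ x in Ω ∩ S, (⟪nu x, y⟫ * φ x) • (up x - um x) ∂(μH[(N : ℝ) - 1])

/-- The total variation measure `|Du|` associated to a BV package. -/
def totalVar (Ω : Set (EN N)) (u : EN N → EN d) (P : BVPack Ω u) : Measure (EN N) :=
  ((volume.restrict Ω).withDensity fun x => ENNReal.ofReal ‖P.grad x‖) + P.cm +
    ((μH[(N : ℝ) - 1]).restrict (Ω ∩ P.S)).withDensity
      fun x => ENNReal.ofReal ‖P.up x - P.um x‖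

/-- The standing assumptions (Carathéodory, (H1), (H2), (H3)) on the
integrand `f`. -/
structure StdIntegrand (N d : ℕ) (f : EN N → Mat d N → ℝ) (α β L : ℝ) : Prop where
  meas : ∀ ξ : Mat d N, Measurable fun y => f y ξ
  nonneg : ∀ y ξ, 0 ≤ f y ξ
  periodic : ∀ (y : EN N) (ξ : Mat d N) (i : Fin N),
    f (y + EuclideanSpace.single i 1) ξ = f y ξ
  alpha_pos : 0 < α
  alpha_le_beta : α ≤ β
  growth : ∀ᵐ y ∂(volume : Measure (EN N)), ∀ ξ,
    α * ‖ξ‖ ≤ f y ξ ∧ f y ξ ≤ β * (1 + ‖ξ‖)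
  lip_pos : 0 < L
  lip : ∀ᵐ y ∂(volume : Measure (EN N)), ∀ ξ ξ', |f y ξ - f y ξ'| ≤ L * ‖ξ - ξ'‖

/-- Hypothesis (H4): `|f(y,ξ) - f^∞(y,ξ)| ≤ C(1+|ξ|^{1-q})`. -/
def H4 (f : EN N → Mat d N → ℝ) (C q : ℝ) : Prop :=
  0 < C ∧ 0 < q ∧ q < 1 ∧
    ∀ᵐ y ∂(volume : Measure (EN N)), ∀ ξ,
      |f y ξ - recc (f y) ξ| ≤ C * (1 + ‖ξ‖ ^ (1 - q))

/-- The projection data used to build the modified integrand `g`: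
`pr` is the nearest-point projection onto `M` on a `δ₀`-neighborhood,
`tanProj s` is the orthogonal projection of `ℝ^d` onto `T_s M` (for `s ∈ M`),
and `chi` is the smooth cut-off. -/
structure ProjData {d : ℕ} (M : Set (EN d)) where
  δ₀ : ℝ
  pr : EN d → EN d
  chi : EN d → ℝ
  tanProj : EN d → EN d →L[ℝ] EN d
  δ₀_pos : 0 < δ₀
  pr_mem : ∀ s, Metric.infDist s M < δ₀ → pr s ∈ M
  pr_nearest : ∀ s, Metric.infDist s M < δ₀ → ‖s - pr s‖ = Metric.infDist s M
  pr_lip : ∃ K : ℝ≥0, LipschitzOnWith K pr {s | Metric.infDist s M < δ₀}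
  tanProj_lip : ∃ K : ℝ≥0,
    LipschitzOnWith K (fun s => tanProj (pr s)) {s | Metric.infDist s M < δ₀}
  chi_smooth : ContDiff ℝ (⊤ : ℕ∞) chi
  chi_supp : HasCompactSupport chi
  chi_range : ∀ s, chi s ∈ Set.Icc (0 : ℝ) 1
  chi_one : ∀ s, Metric.infDist s M ≤ δ₀ / 2 → chi s = 1
  chi_zero : ∀ s, 3 * δ₀ / 4 ≤ Metric.infDist s M → chi s = 0
  tanProj_mem : ∀ s ∈ M, ∀ v, tanProj s v ∈ TangentSet M s
  tanProj_id : ∀ s ∈ M, ∀ v ∈ TangentSet M s, tanProj s v = v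
  tanProj_symm : ∀ s ∈ M, ∀ v w, ⟪tanProj s v, w⟫ = ⟪v, tanProj s w⟫

/-- The cut-off tangential projection `ℙ_s(ξ) = χ(s) P_{Π(s)} ∘ ξ`. -/
def tanP {M : Set (EN d)} (D : ProjData M) (s : EN d) (ξ : Mat d N) : Mat d N :=
  D.chi s • ((D.tanProj (D.pr s)).comp ξ)

/-- The modified integrand `g(y,s,ξ) = f(y,ℙ_s(ξ)) + |ξ - ℙ_s(ξ)|`. -/
def gOf {M : Set (EN d)} (D : ProjData M) (f : EN N → Mat d N → ℝ) :
    EN N → EN d → Mat d N → ℝ :=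
  fun y s ξ => f y (tanP D s ξ) + ‖ξ - tanP D s ξ‖

/-- The geodesic distance on `M`. -/
def geoDist (M : Set (EN d)) (a b : EN d) : ℝ :=
  sInf {l : ℝ | ∃ γ : ℝ → EN d, ContDiff ℝ (⊤ : ℕ∞) γ ∧ (∀ t, γ t ∈ M) ∧
    γ 0 = b ∧ γ 1 = a ∧ l = ∫ t in Set.Icc (0 : ℝ) 1, ‖deriv γ t‖}

/-- The class `G(a,b)` of geodesic curves between `a` and `b`. -/
def GeodClass (M : Set (EN d)) (a b : EN d) : Set (ℝ → EN d) :=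
  {γ | ContDiff ℝ (⊤ : ℕ∞) γ ∧ (∀ t, γ t ∈ M) ∧ (∀ t : ℝ, 1 / 2 ≤ t → γ t = a) ∧
    (∀ t : ℝ, t ≤ -(1 / 2 : ℝ) → γ t = b) ∧
    (∫ t : ℝ, ‖deriv γ t‖) = geoDist M a b}

/-- `I_ε(a,b,ν)`: infimum of `∫_{Q_ν} h(x/ε,∇u)` over the geodesic-boundary
class `B_ε(a,b,ν)`. -/
def Ieps (h : EN N → Mat d N → ℝ) (M : Set (EN d)) (a b : EN d) (ν₁ : EN N)
    (B : OrthonormalBasis (Fin N) ℝ (EN N)) (ε : ℝ) : ℝ :=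
  sInf {c : ℝ | ∃ (φ : EN N → EN d) (Dφ : EN N → Mat d N) (γ : ℝ → EN d),
    γ ∈ GeodClass M a b ∧ MemW11 (obCube B 1) φ Dφ ∧ AeIn (obCube B 1) φ M ∧
    (∀ x ∈ frontier (obCube B 1), φ x = γ (⟪x, ν₁⟫ / ε)) ∧
    c = ∫ x in obCube B 1, h (ε⁻¹ • x) (Dφ x)}

/-- `J_ε(a,b,ν)`: infimum of `∫_{Q_ν} h(x/ε,∇u)` with sharp-interface boundary
datum `u_{a,b,ν}`. -/
def Jeps (h : EN N → Mat d N → ℝ) (M : Set (EN d)) (a b : EN d) (ν₁ : EN N)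
    (B : OrthonormalBasis (Fin N) ℝ (EN N)) (ε : ℝ) : ℝ :=
  sInf {c : ℝ | ∃ (φ : EN N → EN d) (Dφ : EN N → Mat d N),
    MemW11 (obCube B 1) φ Dφ ∧ AeIn (obCube B 1) φ M ∧
    (∀ x ∈ frontier (obCube B 1),
      (0 < ⟪x, ν₁⟫ → φ x = a) ∧ (⟪x, ν₁⟫ ≤ 0 → φ x = b)) ∧
    c = ∫ x in obCube B 1, h (ε⁻¹ • x) (Dφ x)}

/-- The defining properties of the interfacial density `K` from the integral
representation on partitions. -/
def IsJumpRepr (Ω : Set (EN N)) (f : EN N → Mat d N → ℝ) (M : Set (EN d))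
    (εseq : ℕ → ℝ) (K : EN d → EN d → EN N → ℝ) : Prop :=
  (∀ a ∈ M, ∀ b ∈ M, ∀ ν₁ : EN N, ‖ν₁‖ = 1 → 0 ≤ K a b ν₁) ∧
  (∀ a ∈ M, ∀ b ∈ M, ContinuousOn (K a b) (Metric.sphere (0 : EN N) 1)) ∧
  (∀ a ∈ M, ∀ b ∈ M, ∀ ν₁ : EN N, ‖ν₁‖ = 1 → K a b ν₁ = K b a (-ν₁)) ∧
  (∀ T : Finset (EN d), (T : Set (EN d)) ⊆ M →
    ∀ (u : EN N → EN d) (P : BVPack Ω u),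
      (∀ᵐ x ∂(volume.restrict Ω), u x ∈ (T : Set (EN d))) →
      ∀ S : Set (EN N), MeasurableSet S → S ⊆ Ω ∩ P.S →
        GammaLowB f M εseq u Ω S =
          ENNReal.ofReal
            (∫ x in S, K (P.up x) (P.um x) (P.nu x) ∂(μH[(N : ℝ) - 1])))

end

namespace HomAux

/-- Caratheodory composition. -/
lemma aemeas_comp {N d : ℕ} (h : EN N → Mat d N → ℝ) (L : ℝ)
    (hm : ∀ ξ, Measurable fun y => h y ξ)
    (hl : ∀ᵐ y ∂(volume : Measure (EN N)), ∀ ξ ξ', |h y ξ - h y ξ'| ≤ L * ‖ξ - ξ'‖)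
    (F : EN N → Mat d N) (hF : Measurable F) :
    AEMeasurable (fun x => h x (F x)) volume := by
  obtain ⟨G, hGsub, hGm, hGnull⟩ := exists_measurable_superset_of_null (ae_iff.1 hl)
  classical
  have hc : ∀ x, Continuous fun ξ => Gᶜ.indicator (fun y => h y ξ) x := by
    intro x
    by_cases hx : x ∈ Gᶜ
    · simp only [Set.indicator_of_mem hx]
      have hx' : ∀ ξ ξ', |h x ξ - h x ξ'| ≤ L * ‖ξ - ξ'‖ := by
        by_contra hcon
        exact hx (hGsub hcon)
      have : LipschitzWith (Real.toNNReal L) (fun ξ => h x ξ) := by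
        apply LipschitzWith.of_dist_le_mul
        intro a b
        rw [Real.dist_eq, dist_eq_norm]
        refine (hx' a b).trans ?_
        gcongr
        exact Real.le_coe_toNNReal L
      exact this.continuous
    · simp only [Set.indicator_of_notMem hx]
      exact continuous_const
  have hmeas := measurable_uncurry_of_continuous_of_measurable
    (u := fun (ξ : Mat d N) (x : EN N) => Gᶜ.indicator (fun y => h y ξ) x) hc
    (fun ξ => (hm ξ).indicator hGm.compl)
  refine ⟨fun x => Gᶜ.indicator (fun y => h y (F x)) x,
    hmeas.comp (hF.prodMk measurable_id), ?_⟩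
  have : ∀ᵐ x ∂(volume : Measure (EN N)), x ∉ G := by
    rw [ae_iff]; simpa using hGnull
  filter_upwards [this] with x hx
  rw [Set.indicator_of_mem (by exact hx)]

lemma posCube_eq (N : ℕ) (t : ℝ) :
    posCube N t = (WithLp.ofLp : EN N → (Fin N → ℝ)) ⁻¹' (Set.univ.pi fun _ => Set.Ioo 0 t) := by
  ext x; simp [posCube]

lemma isOpen_posCube (N : ℕ) (t : ℝ) : IsOpen (posCube N t) := by
  rw [posCube_eq]
  exact (isOpen_set_pi Set.finite_univ fun _ _ => isOpen_Ioo).preimage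
    (PiLp.continuous_ofLp 2 _)

lemma convex_posCube (N : ℕ) (t : ℝ) : Convex ℝ (posCube N t) := by
  intro x hx y hy a b ha hb hab i
  have := (convex_Ioo (0 : ℝ) t) (hx i) (hy i) ha hb hab
  simpa using this

lemma volume_posCube (N : ℕ) (t : ℝ) : volume (posCube N t) = ENNReal.ofReal t ^ N := by
  rw [posCube_eq, (PiLp.volume_preserving_ofLp (Fin N)).measure_preimage
    (MeasurableSet.univ_pi fun _ => measurableSet_Ioo).nullMeasurableSet]
  simp [Real.volume_pi_Ioo]

lemma real_posCube (N : ℕ) {t : ℝ} (ht : 0 ≤ t) : volume.real (posCube N t) = t ^ N := by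
  simp [measureReal_def, volume_posCube, ENNReal.toReal_ofReal ht]

lemma bound_ae {N d : ℕ} (h : EN N → Mat d N → ℝ) (L C : ℝ)
    (hn : ∀ y ξ, 0 ≤ h y ξ) (hL : 0 ≤ L)
    (hl : ∀ᵐ y ∂(volume : Measure (EN N)), ∀ ξ ξ', |h y ξ - h y ξ'| ≤ L * ‖ξ - ξ'‖)
    (ξ : Mat d N) (hC : ∀ᵐ y ∂(volume : Measure (EN N)), h y ξ ≤ C)
    (φ : EN N → EN d) (K : ℝ≥0) (hφ : LipschitzWith K φ) :
    ∀ᵐ x ∂(volume : Measure (EN N)), ‖h x (ξ + fderiv ℝ φ x)‖ ≤ C + L * K := by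
  filter_upwards [hl, hC] with x hx hx2
  rw [Real.norm_of_nonneg (hn _ _)]
  have h1 := (abs_le.1 (hx (ξ + fderiv ℝ φ x) ξ)).2
  have h2 : L * ‖ξ + fderiv ℝ φ x - ξ‖ ≤ L * K := by
    rw [add_sub_cancel_left]
    gcongr
    exact norm_fderiv_le_of_lipschitz ℝ hφ
  linarith

lemma integ {N d : ℕ} (h : EN N → Mat d N → ℝ) (L C : ℝ)
    (hm : ∀ ξ, Measurable fun y => h y ξ)
    (hn : ∀ y ξ, 0 ≤ h y ξ) (hL : 0 ≤ L)
    (hl : ∀ᵐ y ∂(volume : Measure (EN N)), ∀ ξ ξ', |h y ξ - h y ξ'| ≤ L * ‖ξ - ξ'‖)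
    (ξ : Mat d N) (hC : ∀ᵐ y ∂(volume : Measure (EN N)), h y ξ ≤ C)
    (φ : EN N → EN d) (K : ℝ≥0) (hφ : LipschitzWith K φ) (t : ℝ) :
    IntegrableOn (fun x => h x (ξ + fderiv ℝ φ x)) (posCube N t) volume := by
  refine Measure.integrableOn_of_bounded (M := C + L * K) ?_ ?_ ?_
  · rw [volume_posCube]; exact ENNReal.pow_ne_top ENNReal.ofReal_ne_top
  · exact (aemeas_comp h L hm hl _ ((measurable_fderiv ℝ φ).const_add ξ)).aestronglyMeasurable
  · exact ae_restrict_of_ae (bound_ae h L C hn hL hl ξ hC φ K hφ)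

lemma per_nat {N d : ℕ} (h : EN N → Mat d N → ℝ)
    (hp : ∀ (y : EN N) (ξ : Mat d N) (i : Fin N),
      h (y + EuclideanSpace.single i 1) ξ = h y ξ)
    (n : Fin N → ℕ) (y : EN N) (ξ : Mat d N) :
    h (y + WithLp.toLp 2 (fun j => (n j : ℝ))) ξ = h y ξ := by
  classical
  have h1 : ∀ (i : Fin N) (k : ℕ) (y : EN N),
      h (y + (k : ℝ) • EuclideanSpace.single i (1 : ℝ)) ξ = h y ξ := by
    intro i k
    induction k with
    | zero => intro y; simp
    | succ k ih =>
      intro y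
      rw [Nat.cast_succ, add_smul, one_smul, ← add_assoc, hp, ih]
  have h2 : ∀ (s : Finset (Fin N)) (y : EN N),
      h (y + ∑ i ∈ s, (n i : ℝ) • EuclideanSpace.single i (1 : ℝ)) ξ = h y ξ := by
    intro s
    induction s using Finset.induction_on with
    | empty => intro y; simp
    | insert a s ha ih =>
      intro y
      rw [Finset.sum_insert ha, ← add_assoc, ih, h1]
  have h3 : (WithLp.toLp 2 (fun j => (n j : ℝ)) : EN N) =
      ∑ i ∈ Finset.univ, (n i : ℝ) • EuclideanSpace.single i (1 : ℝ) := by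
    ext j
    simp [Finset.sum_apply, Pi.single_apply]
  rw [h3, h2]

/-- The grid vector. -/
def gv {N k : ℕ} (T : ℕ) (i : Fin N → Fin k) : EN N :=
  WithLp.toLp 2 (fun j => ((T * (i j : ℕ) : ℕ) : ℝ))

lemma gv_apply {N k : ℕ} (T : ℕ) (i : Fin N → Fin k) (j : Fin N) :
    (gv T i) j = (T : ℝ) * (i j : ℕ) := by
  simp [gv]

lemma gv_disj {N k : ℕ} (T : ℕ) {t : ℝ} (htT : t ≤ T) (i j : Fin N → Fin k) (x : EN N)
    (hi : x - gv T i ∈ posCube N t) (hj : x - gv T j ∈ posCube N t) : i = j := by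
  funext l
  have a := hi l
  have b := hj l
  simp only [PiLp.sub_apply, gv_apply, Set.mem_Ioo] at a b
  have hT : (0 : ℝ) ≤ T := Nat.cast_nonneg T
  by_contra hne
  have hne' : (i l : ℕ) ≠ (j l : ℕ) := fun hh => hne (Fin.ext hh)
  rcases lt_or_gt_of_ne hne' with hlt | hlt
  · have : ((i l : ℕ) : ℝ) + 1 ≤ (j l : ℕ) := by exact_mod_cast hlt
    nlinarith [mul_le_mul_of_nonneg_left this hT]
  · have : ((j l : ℕ) : ℝ) + 1 ≤ (i l : ℕ) := by exact_mod_cast hlt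
    nlinarith [mul_le_mul_of_nonneg_left this hT]

lemma gv_sub {N k : ℕ} (T : ℕ) {t S : ℝ} (htT : t ≤ T) (hS : (k * T : ℝ) ≤ S)
    (i : Fin N → Fin k) (x : EN N)
    (hi : x - gv T i ∈ posCube N t) : x ∈ posCube N S := by
  intro l
  have a := hi l
  simp only [PiLp.sub_apply, gv_apply, Set.mem_Ioo] at a
  have hT : (0 : ℝ) ≤ T := Nat.cast_nonneg T
  have h1 : ((i l : ℕ) : ℝ) + 1 ≤ k := by exact_mod_cast (i l).2
  have h2 : (0 : ℝ) ≤ (i l : ℕ) := Nat.cast_nonneg _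
  constructor
  · nlinarith [mul_nonneg hT h2]
  · nlinarith [mul_le_mul_of_nonneg_left h1 hT]

lemma lip_sum {N d : ℕ} {ι : Type*} (s : Finset ι) (K : ℝ≥0) (F : ι → EN N → EN d)
    (hF : ∀ i, LipschitzWith K (F i)) :
    ∃ K', LipschitzWith K' (fun x => ∑ i ∈ s, F i x) := by
  classical
  induction s using Finset.induction_on with
  | empty => exact ⟨0, by simpa using LipschitzWith.const (0 : EN d)⟩
  | insert a s ha ih =>
    obtain ⟨K', hK'⟩ := ih
    refine ⟨K + K', ?_⟩
    simp only [Finset.sum_insert ha]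
    exact (hF a).add hK'

lemma key {N d : ℕ} (h : EN N → Mat d N → ℝ) (L C : ℝ)
    (hm : ∀ ξ, Measurable fun y => h y ξ)
    (hn : ∀ y ξ, 0 ≤ h y ξ) (hL : 0 ≤ L)
    (hp : ∀ (y : EN N) (ξ : Mat d N) (i : Fin N),
      h (y + EuclideanSpace.single i 1) ξ = h y ξ)
    (hl : ∀ᵐ y ∂(volume : Measure (EN N)), ∀ ξ ξ', |h y ξ - h y ξ'| ≤ L * ‖ξ - ξ'‖)
    (ξ : Mat d N) (hC : ∀ᵐ y ∂(volume : Measure (EN N)), h y ξ ≤ C)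
    (φ : EN N → EN d) (K : ℝ≥0) (hφ : LipschitzWith K φ) (t S : ℝ) (k T : ℕ)
    (ht : 0 ≤ t) (hS0 : 0 ≤ S)
    (htT : t ≤ T) (hS : (k * T : ℝ) ≤ S) (hφ0 : ∀ x, x ∉ posCube N t → φ x = 0) :
    ∃ (ψ : EN N → EN d) (K' : ℝ≥0), LipschitzWith K' ψ ∧
      (∀ x, x ∉ posCube N S → ψ x = 0) ∧
      ∫ x in posCube N S, h x (ξ + fderiv ℝ ψ x) ≤
        k ^ N * (∫ x in posCube N t, h x (ξ + fderiv ℝ φ x)) + C * (S ^ N - (k * t) ^ N) := by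
  classical
  set ψ : EN N → EN d := fun x => ∑ i : Fin N → Fin k, φ (x - gv T i) with hψ
  obtain ⟨K', hK'⟩ : ∃ K', LipschitzWith K' ψ := by
    apply lip_sum _ K
    intro i
    refine LipschitzWith.of_dist_le_mul fun x y => ?_
    simpa using hφ.dist_le_mul (x - gv T i) (y - gv T i)
  refine ⟨ψ, K', hK', ?_, ?_⟩
  · intro x hx
    refine Finset.sum_eq_zero fun i _ => hφ0 _ fun hi => hx (gv_sub T htT hS i x hi)
  set A : (Fin N → Fin k) → Set (EN N) := fun i => (fun x => x - gv T i) ⁻¹' posCube N t with hA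
  have hAo : ∀ i, IsOpen (A i) := fun i => (isOpen_posCube N t).preimage (by fun_prop)
  have hAm : ∀ i, MeasurableSet (A i) := fun i => (hAo i).measurableSet
  have hAsub : ∀ i, A i ⊆ posCube N S := fun i x hx => gv_sub T htT hS i x hx
  have hAd : ∀ i j x, x ∈ A i → x ∈ A j → i = j := fun i j x hi hj => gv_disj T htT i j x hi hj
  have hAvol : ∀ i, volume.real (A i) = t ^ N := by
    intro i
    rw [← real_posCube N ht, measureReal_def, measureReal_def,
      (measurePreserving_sub_right volume (gv T i)).measure_preimage
        (isOpen_posCube N t).measurableSet.nullMeasurableSet]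
  have hIntS := integ h L C hm hn hL hl ξ hC ψ K' hK' S
  set U : Set (EN N) := ⋃ i ∈ (Finset.univ : Finset (Fin N → Fin k)), A i with hU
  have hUm : MeasurableSet U := Finset.measurableSet_biUnion _ fun i _ => hAm i
  have hUsub : U ⊆ posCube N S := by
    intro x hx
    simp only [hU, Set.mem_iUnion] at hx
    obtain ⟨i, _, hi⟩ := hx
    exact hAsub i hi
  have hpw : Set.Pairwise (↑(Finset.univ : Finset (Fin N → Fin k))) (Function.onFun Disjoint A) := by
    intro i _ j _ hij
    exact Set.disjoint_left.2 fun x hi hj => hij (hAd i j x hi hj)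
  have hsplit : ∫ x in posCube N S, h x (ξ + fderiv ℝ ψ x) =
      (∫ x in U, h x (ξ + fderiv ℝ ψ x)) + ∫ x in posCube N S \ U, h x (ξ + fderiv ℝ ψ x) := by
    rw [← setIntegral_union Set.disjoint_sdiff_right
      ((isOpen_posCube N S).measurableSet.diff hUm) (hIntS.mono_set hUsub)
      (hIntS.mono_set Set.sdiff_subset), Set.union_sdiff_cancel hUsub]
  have hI1 : ∫ x in U, h x (ξ + fderiv ℝ ψ x) =
      k ^ N * (∫ x in posCube N t, h x (ξ + fderiv ℝ φ x)) := by
    rw [hU, integral_biUnion_finset _ (fun i _ => hAm i) hpw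
      (fun i _ => hIntS.mono_set (hAsub i))]
    have : ∀ i : Fin N → Fin k, ∫ x in A i, h x (ξ + fderiv ℝ ψ x) =
        ∫ x in posCube N t, h x (ξ + fderiv ℝ φ x) := by
      intro i
      rw [← (measurePreserving_sub_right volume (gv T i)).setIntegral_preimage_emb
        (measurableEmbedding_subRight (gv T i)) (fun x => h x (ξ + fderiv ℝ φ x))]
      refine setIntegral_congr_fun (hAm i) fun x hx => ?_
      have hev : ψ =ᶠ[𝓝 x] fun y => φ (y - gv T i) := by
        filter_upwards [(hAo i).mem_nhds hx] with y hy
        refine Finset.sum_eq_single i (fun j _ hj => hφ0 _ fun hyj => hj (hAd j i y hyj hy)) ?_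
        simp
      have hper : h x = h (x - gv T i) := by
        funext η
        have := per_nat h hp (fun j => T * (i j : ℕ)) (x - gv T i) η
        rw [← this]
        congr 1
        simp [gv]
      show h x (ξ + fderiv ℝ ψ x) = h (x - gv T i) (ξ + fderiv ℝ φ (x - gv T i))
      rw [hev.fderiv_eq, fderiv_comp_sub, hper]
    rw [Finset.sum_congr rfl fun i _ => this i]
    simp
  have hUvol : volume.real U = (k * t) ^ N := by
    rw [hU, measureReal_biUnion_finset hpw (fun i _ => hAm i)
      (fun i _ => ((measure_mono (hAsub i)).trans_lt (by
        rw [volume_posCube]; exact ENNReal.pow_lt_top ENNReal.ofReal_lt_top)).ne)]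
    rw [Finset.sum_congr rfl fun i _ => hAvol i]
    simp [mul_pow]
  have hfin : volume (posCube N S) ≠ ⊤ := by
    rw [volume_posCube]; exact ENNReal.pow_ne_top ENNReal.ofReal_ne_top
  have hRvol : volume.real (posCube N S \ U) = S ^ N - (k * t) ^ N := by
    rw [measureReal_sdiff hUsub hUm hfin, hUvol, real_posCube N hS0]
  have hI2 : ∫ x in posCube N S \ U, h x (ξ + fderiv ℝ ψ x) ≤ C * (S ^ N - (k * t) ^ N) := by
    have hfr : ∀ᵐ x ∂(volume : Measure (EN N)), ∀ i : Fin N → Fin k,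
        x - gv T i ∉ frontier (posCube N t) := by
      rw [ae_all_iff]
      intro i
      have h0 : ∀ᵐ x ∂(volume : Measure (EN N)), x ∉ frontier (posCube N t) := by
        rw [ae_iff]; simpa using (convex_posCube N t).addHaar_frontier volume
      exact (measurePreserving_sub_right volume (gv T i)).quasiMeasurePreserving.ae h0
    calc ∫ x in posCube N S \ U, h x (ξ + fderiv ℝ ψ x)
        ≤ ∫ x in posCube N S \ U, C := by
          refine setIntegral_mono_ae_restrict (hIntS.mono_set Set.sdiff_subset)
            (integrableOn_const (ne_top_of_le_ne_top hfin (measure_mono Set.sdiff_subset))) ?_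
          rw [Filter.EventuallyLE, ae_restrict_iff' ((isOpen_posCube N S).measurableSet.diff hUm)]
          filter_upwards [hfr, hC] with x hx hxC hxU
          have hev : ψ =ᶠ[𝓝 x] fun _ => 0 := by
            have : ∀ i : Fin N → Fin k, ∀ᶠ y in 𝓝 x, φ (y - gv T i) = 0 := by
              intro i
              have hnot : x - gv T i ∉ closure (posCube N t) := by
                intro hcl
                apply hx i
                rw [frontier, (isOpen_posCube N t).interior_eq]
                refine ⟨hcl, fun hmem => hxU.2 ?_⟩
                simp only [hU, Set.mem_iUnion]
                exact ⟨i, Finset.mem_univ _, hmem⟩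
              have hco : Continuous fun y : EN N => y - gv T i := by fun_prop
              filter_upwards [hco.continuousAt.preimage_mem_nhds
                (isClosed_closure.isOpen_compl.mem_nhds hnot)] with y hy
              exact hφ0 _ fun hmem => hy (subset_closure hmem)
            filter_upwards [eventually_all.2 this] with y hy
            exact Finset.sum_eq_zero fun i _ => hy i
          rw [hev.fderiv_eq]
          simpa using hxC
      _ = C * (S ^ N - (k * t) ^ N) := by
          rw [setIntegral_const, hRvol, smul_eq_mul, mul_comm]
  rw [hsplit, hI1]
  linarith

lemma cell_bdd {N d : ℕ} (h : EN N → Mat d N → ℝ) (hn : ∀ y ξ, 0 ≤ h y ξ)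
    (ξ : Mat d N) {t : ℝ} (ht : 0 ≤ t) : ∀ c ∈ {c : ℝ | ∃ (φ : EN N → EN d) (K : ℝ≥0),
    LipschitzWith K φ ∧ (∀ x, x ∉ posCube N t → φ x = 0) ∧
    c = (t ^ N)⁻¹ * ∫ x in posCube N t, h x (ξ + fderiv ℝ φ x)}, 0 ≤ c := by
  rintro c ⟨φ, K, _, _, rfl⟩
  exact mul_nonneg (by positivity) (integral_nonneg fun x => hn _ _)

lemma cell_ne {N d : ℕ} (h : EN N → Mat d N → ℝ)
    (ξ : Mat d N) (t : ℝ) : {c : ℝ | ∃ (φ : EN N → EN d) (K : ℝ≥0),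
    LipschitzWith K φ ∧ (∀ x, x ∉ posCube N t → φ x = 0) ∧
    c = (t ^ N)⁻¹ * ∫ x in posCube N t, h x (ξ + fderiv ℝ φ x)}.Nonempty :=
  ⟨_, fun _ => 0, 0, LipschitzWith.const _, fun _ _ => rfl, rfl⟩

lemma cell_key {N d : ℕ} (h : EN N → Mat d N → ℝ) (L C : ℝ)
    (hm : ∀ ξ, Measurable fun y => h y ξ)
    (hn : ∀ y ξ, 0 ≤ h y ξ) (hL : 0 ≤ L)
    (hp : ∀ (y : EN N) (ξ : Mat d N) (i : Fin N),
      h (y + EuclideanSpace.single i 1) ξ = h y ξ)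
    (hl : ∀ᵐ y ∂(volume : Measure (EN N)), ∀ ξ ξ', |h y ξ - h y ξ'| ≤ L * ‖ξ - ξ'‖)
    (ξ : Mat d N) (hC : ∀ᵐ y ∂(volume : Measure (EN N)), h y ξ ≤ C)
    (t S : ℝ) (k T : ℕ) (ht : 0 < t) (hS0 : 0 < S)
    (htT : t ≤ T) (hS : (k * T : ℝ) ≤ S) :
    freeCell h ξ S ≤ (k * t / S) ^ N * freeCell h ξ t + C * (1 - (k * t / S) ^ N) := by
  have hr : 0 ≤ (k * t / S) ^ N := by positivity
  refine le_of_forall_pos_le_add fun ε hε => ?_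
  have hδ : 0 < ε / ((k * t / S) ^ N + 1) := by positivity
  obtain ⟨c, ⟨φ, K, hφ, hφ0, rfl⟩, hlt⟩ :=
    Real.lt_sInf_add_pos (cell_ne h ξ t) hδ
  obtain ⟨ψ, K', hψ, hψ0, hle⟩ := key h L C hm hn hL hp hl ξ hC φ K hφ t S k T ht.le hS0.le htT hS hφ0
  have h1 : freeCell h ξ S ≤ (S ^ N)⁻¹ * ∫ x in posCube N S, h x (ξ + fderiv ℝ ψ x) :=
    csInf_le ⟨0, cell_bdd h hn ξ hS0.le⟩ ⟨ψ, K', hψ, hψ0, rfl⟩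
  set I := ∫ x in posCube N t, h x (ξ + fderiv ℝ φ x)
  have hSN : 0 < S ^ N := by positivity
  have h2 : freeCell h ξ S ≤ (k * t / S) ^ N * ((t ^ N)⁻¹ * I) + C * (1 - (k * t / S) ^ N) := by
    refine h1.trans ((mul_le_mul_of_nonneg_left hle (by positivity)).trans (le_of_eq ?_))
    rw [div_pow, mul_pow]
    field_simp
  have h3 : (k * t / S) ^ N * ((t ^ N)⁻¹ * I) ≤
      (k * t / S) ^ N * (freeCell h ξ t + ε / ((k * t / S) ^ N + 1)) :=
    mul_le_mul_of_nonneg_left hlt.le hr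
  have h4 : (k * t / S) ^ N * (ε / ((k * t / S) ^ N + 1)) ≤ ε := by
    rw [mul_div_assoc', div_le_iff₀ (by positivity)]
    nlinarith
  nlinarith

lemma cell_tendsto {N d : ℕ} (h : EN N → Mat d N → ℝ) (L C : ℝ)
    (hm : ∀ ξ, Measurable fun y => h y ξ)
    (hn : ∀ y ξ, 0 ≤ h y ξ) (hL : 0 ≤ L)
    (hp : ∀ (y : EN N) (ξ : Mat d N) (i : Fin N),
      h (y + EuclideanSpace.single i 1) ξ = h y ξ)
    (hl : ∀ᵐ y ∂(volume : Measure (EN N)), ∀ ξ ξ', |h y ξ - h y ξ'| ≤ L * ‖ξ - ξ'‖)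
    (ξ : Mat d N) (hC0 : 0 ≤ C) (hC : ∀ᵐ y ∂(volume : Measure (EN N)), h y ξ ≤ C) :
    ∃ Lv : ℝ, Tendsto (fun t => freeCell h ξ t) atTop (𝓝 Lv) := by
  set a : ℝ → ℝ := fun t => freeCell h ξ t with ha
  have a0 : ∀ t, 0 ≤ t → 0 ≤ a t := fun t ht => Real.sInf_nonneg (cell_bdd h hn ξ ht)
  have hkey := cell_key h L C hm hn hL hp hl ξ hC
  -- limit inequality
  have hlim : ∀ t : ℝ, 0 < t → ∀ ε : ℝ, 0 < ε → ∀ᶠ S in atTop,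
      a S < (t / (⌊t⌋₊ + 1 : ℕ)) ^ N * a t + C * (1 - (t / (⌊t⌋₊ + 1 : ℕ)) ^ N) + ε := by
    intro t ht ε hε
    set T : ℕ := ⌊t⌋₊ + 1 with hT
    have hTpos : (0 : ℝ) < T := by positivity
    have htT : t ≤ T := by rw [hT]; push_cast; exact (Nat.lt_floor_add_one t).le
    have h1 : Tendsto (fun S : ℝ => ((⌊(T : ℝ)⁻¹ * S⌋₊ : ℝ) / S * t)) atTop (𝓝 ((T : ℝ)⁻¹ * t)) :=
      (tendsto_nat_floor_mul_div_atTop (by positivity)).mul_const t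
    have h2 : Tendsto (fun S : ℝ => (⌊(T : ℝ)⁻¹ * S⌋₊ * t / S) ^ N * a t +
        C * (1 - (⌊(T : ℝ)⁻¹ * S⌋₊ * t / S) ^ N)) atTop
        (𝓝 ((t / T) ^ N * a t + C * (1 - (t / T) ^ N))) := by
      have h1' : Tendsto (fun S : ℝ => (⌊(T : ℝ)⁻¹ * S⌋₊ * t / S) ^ N) atTop (𝓝 ((t / T) ^ N)) := by
        refine Tendsto.pow ?_ N
        rw [div_eq_inv_mul]
        refine h1.congr fun S => ?_
        ring
      exact (h1'.mul_const _).add ((h1'.const_sub 1).const_mul C)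
    filter_upwards [h2.eventually_lt_const (lt_add_of_pos_right _ hε), eventually_gt_atTop 0]
      with S hS hS0
    refine lt_of_le_of_lt (hkey t S ⌊(T : ℝ)⁻¹ * S⌋₊ T ht hS0 htT ?_) hS
    have : (⌊(T : ℝ)⁻¹ * S⌋₊ : ℝ) ≤ (T : ℝ)⁻¹ * S := Nat.floor_le (by positivity)
    calc (⌊(T : ℝ)⁻¹ * S⌋₊ : ℝ) * T ≤ (T : ℝ)⁻¹ * S * T := by gcongr
      _ = S := by field_simp
  have hq : Tendsto (fun t : ℝ => (t / (⌊t⌋₊ + 1 : ℕ)) ^ N) atTop (𝓝 1) := by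
    have h1 : Tendsto (fun t : ℝ => ((⌊t⌋₊ : ℝ) / t + t⁻¹)⁻¹) atTop (𝓝 ((1 + 0)⁻¹)) :=
      ((tendsto_nat_floor_div_atTop).add tendsto_inv_atTop_zero).inv₀ (by norm_num)
    have h2 := h1.pow N
    simp only [add_zero, inv_one, one_pow] at h2
    refine h2.congr' ?_
    filter_upwards [eventually_gt_atTop 0] with t ht
    congr 1
    push_cast
    field_simp
  have hub : ∃ B, ∀ᶠ S in atTop, a S ≤ B := by
    refine ⟨_, (hlim 1 one_pos 1 one_pos).mono fun S hS => hS.le⟩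
  have hbdd_le : IsBoundedUnder (· ≤ ·) atTop a := by
    obtain ⟨B, hB⟩ := hub
    exact ⟨B, by simpa [Filter.eventually_map] using hB⟩
  have hbdd_ge : IsBoundedUnder (· ≥ ·) atTop a :=
    ⟨0, by
      rw [Filter.eventually_map]
      filter_upwards [eventually_ge_atTop 0] with t ht using a0 t ht⟩
  refine ⟨liminf a atTop, ?_⟩
  rw [tendsto_order]
  constructor
  · intro b hb
    exact eventually_lt_of_lt_liminf hb hbdd_ge
  · intro b hb
    set l := liminf a atTop with hl'
    set ε := (b - l) / 3 with hε
    have hεp : 0 < ε := by rw [hε]; linarith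
    have hfreq : ∃ᶠ t in atTop, a t < l + ε :=
      frequently_lt_of_liminf_lt hbdd_le.isCoboundedUnder_ge (by linarith)
    have hCq : Tendsto (fun t : ℝ => C * (1 - (t / (⌊t⌋₊ + 1 : ℕ)) ^ N)) atTop (𝓝 0) := by
      simpa using (hq.const_sub 1).const_mul C
    obtain ⟨t, hta, htq, ht0⟩ := (hfreq.and_eventually
      ((hCq.eventually_lt_const hεp).and (eventually_gt_atTop 0))).exists
    have hq1 : (t / (⌊t⌋₊ + 1 : ℕ)) ^ N ≤ 1 := by
      refine pow_le_one₀ (by positivity) ?_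
      rw [div_le_one (by positivity)]
      push_cast
      exact (Nat.lt_floor_add_one t).le
    filter_upwards [hlim t ht0 ε hεp] with S hS
    have : (t / (⌊t⌋₊ + 1 : ℕ)) ^ N * a t ≤ a t :=
      mul_le_of_le_one_left (a0 t ht0.le) hq1
    have : b = l + ε + ε + ε := by rw [hε]; ring
    linarith

end HomAux

/-- Identification of the tangentially homogenized density:
for `s ∈ M` and `ξ ∈ [T_s M]^N`, the constrained homogenization limit
`Tf_hom(s,ξ)` and the unconstrained homogenization limit `g_hom(s,ξ)` of the
modified integrand both exist and coincide. -/
theorem statement_5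
    (N d : ℕ) (M : Set (EN d)) (hM : IsNiceManifold d M)
    (f : EN N → Mat d N → ℝ) (α β L : ℝ) (hf : StdIntegrand N d f α β L)
    (D : ProjData M) :
    ∀ s ∈ M, ∀ ξ : Mat d N, TangentCols M s ξ →
      ∃ Lv : ℝ,
        Filter.Tendsto (fun t => tanCell f M s ξ t) Filter.atTop (nhds Lv) ∧
        Filter.Tendsto (fun t => freeCell (fun y => gOf D f y s) ξ t)
          Filter.atTop (nhds Lv) := by
  intro s hs ξ hξ
  have hdist : Metric.infDist s M = 0 := Metric.infDist_zero_of_mem hs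
  have hpr : D.pr s = s := by
    have := D.pr_nearest s (by rw [hdist]; exact D.δ₀_pos)
    rw [hdist, norm_eq_zero, sub_eq_zero] at this
    exact this.symm
  have hchi : D.chi s = 1 := D.chi_one s (by rw [hdist]; exact (half_pos D.δ₀_pos).le)
  set P := D.tanProj s with hP
  have htanP : ∀ η : Mat d N, tanP D s η = P.comp η := by
    intro η; simp [tanP, hchi, hpr, hP]
  have hPmem : ∀ v, P v ∈ TangentSet M s := D.tanProj_mem s hs
  have hPid : ∀ v ∈ TangentSet M s, P v = v := D.tanProj_id s hs
  have hPξ : P.comp ξ = ξ := by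
    have : ((P.comp ξ : Mat d N) : EN N →ₗ[ℝ] EN d) = (ξ : EN N →ₗ[ℝ] EN d) := by
      refine (EuclideanSpace.basisFun (Fin N) ℝ).toBasis.ext fun i => ?_
      simpa using hPid _ (hξ i)
    exact ContinuousLinearMap.coe_injective this
  have hg : ∀ y η, gOf D f y s η = f y (P.comp η) + ‖η - P.comp η‖ := by
    intro y η; simp only [gOf, htanP]
  set h : EN N → Mat d N → ℝ := fun y => gOf D f y s with hh
  have hLpos := hf.lip_pos
  have hPc : ∀ η : Mat d N, ‖P.comp η‖ ≤ ‖P‖ * ‖η‖ := fun η => ContinuousLinearMap.opNorm_comp_le P η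
  have hm : ∀ η, Measurable fun y => h y η := by
    intro η
    simp only [hh, hg]
    exact (hf.meas _).add_const _
  have hn : ∀ y η, 0 ≤ h y η := by
    intro y η
    simp only [hh, hg]
    exact add_nonneg (hf.nonneg _ _) (norm_nonneg _)
  have hp : ∀ (y : EN N) (η : Mat d N) (i : Fin N),
      h (y + EuclideanSpace.single i 1) η = h y η := by
    intro y η i
    simp only [hh, hg, hf.periodic]
  have hl : ∀ᵐ y ∂(volume : Measure (EN N)), ∀ η η', |h y η - h y η'| ≤
      (L * ‖P‖ + (1 + ‖P‖)) * ‖η - η'‖ := by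
    filter_upwards [hf.lip] with y hy η η'
    simp only [hh, hg]
    have e : P.comp η - P.comp η' = P.comp (η - η') := (ContinuousLinearMap.comp_sub P η η').symm
    have h1 := hy (P.comp η) (P.comp η')
    rw [e] at h1
    have h2 : L * ‖P.comp (η - η')‖ ≤ L * (‖P‖ * ‖η - η'‖) :=
      mul_le_mul_of_nonneg_left (hPc _) hLpos.le
    have h3 := abs_norm_sub_norm_le (η - P.comp η) (η' - P.comp η')
    have h4 : η - P.comp η - (η' - P.comp η') = (η - η') - P.comp (η - η') := by
      rw [← e]; abel
    rw [h4] at h3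
    have h5 := norm_sub_le (η - η') (P.comp (η - η'))
    have h6 := hPc (η - η')
    have h7 := abs_add_le (f y (P.comp η) - f y (P.comp η')) (‖η - P.comp η‖ - ‖η' - P.comp η'‖)
    have h8 : f y (P.comp η) + ‖η - P.comp η‖ - (f y (P.comp η') + ‖η' - P.comp η'‖) =
      (f y (P.comp η) - f y (P.comp η')) + (‖η - P.comp η‖ - ‖η' - P.comp η'‖) := by ring
    rw [h8]
    nlinarith
  have hC : ∀ᵐ y ∂(volume : Measure (EN N)), h y ξ ≤ β * (1 + ‖ξ‖) := by
    filter_upwards [hf.growth] with y hy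
    simp only [hh, hg, hPξ, sub_self, norm_zero, add_zero]
    exact (hy ξ).2
  have hCf : ∀ᵐ y ∂(volume : Measure (EN N)), f y ξ ≤ β * (1 + ‖ξ‖) := by
    filter_upwards [hf.growth] with y hy using (hy ξ).2
  have hβ : 0 ≤ β := hf.alpha_pos.le.trans hf.alpha_le_beta
  have hL' : 0 ≤ L * ‖P‖ + (1 + ‖P‖) := by positivity
  obtain ⟨Lv, hLv⟩ := HomAux.cell_tendsto h (L * ‖P‖ + (1 + ‖P‖)) (β * (1 + ‖ξ‖)) hm hn hL' hp hl ξ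
    (by positivity) hC
  refine ⟨Lv, hLv.congr' ?_, hLv⟩
  filter_upwards [eventually_gt_atTop 0] with t ht
  have htN : 0 ≤ (t ^ N)⁻¹ := by positivity
  apply le_antisymm
  · -- every tangential competitor is a free competitor with the same energy
    refine csInf_le_csInf ⟨0, HomAux.cell_bdd h hn ξ ht.le⟩ ?_ ?_
    · exact ⟨_, fun _ => 0, 0, LipschitzWith.const _, fun _ => by simpa using hPmem 0,
        fun _ _ => rfl, rfl⟩
    · rintro c ⟨φ, K, hφ, hφt, hφ0, rfl⟩
      refine ⟨φ, K, hφ, hφ0, ?_⟩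
      congr 1
      refine integral_congr_ae (Eventually.of_forall fun x => ?_)
      have hPφ : P.comp (fderiv ℝ φ x) = fderiv ℝ φ x := by
        by_cases hd : DifferentiableAt ℝ φ x
        · have e : (fun y => P (φ y)) = φ := funext fun y => hPid _ (hφt y)
          have := (P.hasFDerivAt.comp x hd.hasFDerivAt).fderiv
          rw [← this]
          exact congrArg (fun u => fderiv ℝ u x) e
        · rw [fderiv_zero_of_not_differentiableAt hd]; simp
      simp only [hh, hg]
      rw [ContinuousLinearMap.comp_add, hPφ, hPξ, sub_self, norm_zero, add_zero]
  · -- projecting a free competitor decreases the energy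
    refine le_csInf (HomAux.cell_ne h ξ t) ?_
    rintro c ⟨φ, K, hφ, hφ0, rfl⟩
    have hPφl : LipschitzWith (‖P‖₊ * K) (fun x => P (φ x)) := P.lipschitz.comp hφ
    refine le_trans (b := (t ^ N)⁻¹ * ∫ x in posCube N t, f x (ξ + fderiv ℝ (fun x => P (φ x)) x))
      (csInf_le ⟨0, ?_⟩ ?_) ?_
    · rintro c ⟨φ, K, _, _, _, rfl⟩
      exact mul_nonneg htN (integral_nonneg fun x => hf.nonneg _ _)
    · exact ⟨fun x => P (φ x), _, hPφl, fun x => hPmem _, fun x hx => by simp [hφ0 x hx], rfl⟩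
    · refine mul_le_mul_of_nonneg_left ?_ htN
      refine setIntegral_mono_ae
        (HomAux.integ f L _ hf.meas hf.nonneg hLpos.le hf.lip ξ hCf _ _ hPφl t)
        (HomAux.integ h _ _ hm hn hL' hl ξ hC φ K hφ t) ?_
      filter_upwards [hφ.ae_differentiableAt (μ := volume)] with x hd
      have hfd : fderiv ℝ (fun x => P (φ x)) x = P.comp (fderiv ℝ φ x) :=
        (P.hasFDerivAt.comp x hd.hasFDerivAt).fderiv
      simp only [hh, hg]
      rw [ContinuousLinearMap.comp_add, hPξ, hfd]
      exact le_add_of_nonneg_right (norm_nonneg _)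
end

section
/- (Tangential quasiconvexity of Tf_hom) For every s ∈ M, every ξ ∈ [T_s M]^N and every φ ∈ W^{1,∞}_0(Q; T_s M), where Q = (−1/2,1/2)^N, one has Tf_hom(s,ξ) ≤ ∫_Q Tf_hom(s, ξ + ∇φ(y)) dy. In particular, ξ ↦ Tf_hom(s,ξ) is rank-one convex on [T_s M]^N. -/
open MeasureTheory Filter Set
open scoped ENNReal RealInnerProductSpace Topology NNReal

/-! ### The tangent set is a linear subspace -/

theorem tangentSet_submodule {d : ℕ} {M : Set (EN d)} (hM : IsNiceManifold d M) {s : EN d}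
    (hs : s ∈ M) : ∃ V : Submodule ℝ (EN d), TangentSet M s = (V : Set (EN d)) := by
  obtain ⟨-, -, -, m, hm, hsub⟩ := hM
  obtain ⟨U, F, hU, hsU, hF, hMU, hsurj⟩ := hsub s hs
  have hstrict : HasStrictFDerivAt F (fderiv ℝ F s) s := by
    have h1 : ContDiffAt ℝ (⊤ : ℕ∞) F s := hF.contDiffAt (hU.mem_nhds hsU)
    exact h1.hasStrictFDerivAt (by simp)
  have hrange : ((fderiv ℝ F s : EN d →L[ℝ] EN (d - m)) : EN d →ₗ[ℝ] EN (d - m)).range = ⊤ :=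
    LinearMap.range_eq_top.2 (hsurj s hsU)
  have hmem : ∀ y ∈ U, (y ∈ M ↔ F y = 0) := by
    intro y hy
    have : y ∈ M ∩ U ↔ y ∈ {y ∈ U | F y = 0} := by rw [hMU]
    simpa [hy] using this
  have hFs : F s = 0 := (hmem s hsU).1 hs
  refine ⟨((fderiv ℝ F s : EN d →L[ℝ] EN (d - m)) : EN d →ₗ[ℝ] EN (d - m)).ker, ?_⟩
  ext v
  constructor
  · rintro ⟨γ, hγM, hγ0, hγ⟩
    have h1 : HasDerivAt (F ∘ γ) (fderiv ℝ F s v) 0 := by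
      have h2 : HasFDerivAt F (fderiv ℝ F s) (γ 0) := by rw [hγ0]; exact hstrict.hasFDerivAt
      exact h2.comp_hasDerivAt 0 hγ
    have h3 : (F ∘ γ) =ᶠ[𝓝 0] fun _ => (0 : EN (d - m)) := by
      have : ∀ᶠ t in 𝓝 (0 : ℝ), γ t ∈ U :=
        hγ.continuousAt.eventually (by rw [hγ0]; exact hU.mem_nhds hsU)
      filter_upwards [this] with t ht
      exact (hmem _ ht).1 (hγM t)
    have h4 := h1.congr_of_eventuallyEq h3.symm
    have h5 := h4.unique (hasDerivAt_const (0 : ℝ) (0 : EN (d - m)))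
    simpa using h5
  · intro hv
    classical
    let g := HasStrictFDerivAt.implicitFunction F (fderiv ℝ F s) hstrict hrange (F s)
    let v' : ((fderiv ℝ F s : EN d →L[ℝ] EN (d - m)) : EN d →ₗ[ℝ] EN (d - m)).ker := ⟨v, hv⟩
    have hg0 : g 0 = s := hstrict.implicitFunction_apply_image hrange
    have hgd := (hstrict.to_implicitFunction hrange).hasFDerivAt
    have hline : HasDerivAt (fun t : ℝ => t • v') v' 0 := by
      simpa using (hasDerivAt_id (0 : ℝ)).smul_const v'
    have hc : HasDerivAt (fun t : ℝ => g (t • v')) v 0 := by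
      have h2 : HasFDerivAt g
          (((fderiv ℝ F s : EN d →L[ℝ] EN (d - m)) : EN d →ₗ[ℝ] EN (d - m)).ker.subtypeL)
          ((0 : ℝ) • v') := by
        rw [zero_smul]; exact hgd
      exact h2.comp_hasDerivAt (0 : ℝ) hline
    have hev : ∀ᶠ t in 𝓝 (0 : ℝ), g (t • v') ∈ M := by
      have hU' : ∀ᶠ t in 𝓝 (0 : ℝ), g (t • v') ∈ U :=
        hc.continuousAt.eventually (by simpa [hg0] using hU.mem_nhds hsU)
      have hz : ∀ᶠ t in 𝓝 (0 : ℝ), F (g (t • v')) = F s := by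
        have h3 := hstrict.map_implicitFunction_eq hrange
        have h4 : Tendsto (fun t : ℝ => (F s, t • v')) (𝓝 0) (𝓝 (F s, 0)) := by
          have : Continuous (fun t : ℝ => (F s, t • v')) := by fun_prop
          simpa using this.tendsto 0
        exact h4.eventually h3
      filter_upwards [hU', hz] with t h1 h2
      exact (hmem _ h1).2 (by rw [h2, hFs])
    refine ⟨fun t => if g (t • v') ∈ M then g (t • v') else s, ?_, ?_, ?_⟩
    · intro t
      dsimp only
      split_ifs with h
      · exact h
      · exact hs
    · simp [hg0]
    · refine hc.congr_of_eventuallyEq ?_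
      filter_upwards [hev] with t ht
      simp [ht]

/-! ### Measurability -/

theorem Std.aesm {N d : ℕ} {f : EN N → Mat d N → ℝ} {α β L : ℝ} (hf : StdIntegrand N d f α β L)
    {g : EN N → Mat d N} (hg : Measurable g) :
    AEStronglyMeasurable (fun x => f x (g x)) (volume : Measure (EN N)) := by
  classical
  obtain ⟨S, hSsub, hSm, hS0⟩ := exists_measurable_superset_of_null (ae_iff.1 hf.lip)
  let u : Mat d N → EN N → ℝ := fun ξ y => if y ∈ S then 0 else f y ξ
  have hu : Measurable (Function.uncurry u) := by
    apply measurable_uncurry_of_continuous_of_measurable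
    · intro y
      by_cases hy : y ∈ S
      · simp only [u, hy, if_true]; exact continuous_const
      · simp only [u, hy, if_false]
        have h1 : ∀ ξ ξ', |f y ξ - f y ξ'| ≤ L * ‖ξ - ξ'‖ := by
          by_contra hc
          exact hy (hSsub hc)
        have : LipschitzWith (Real.toNNReal L) (f y) := by
          apply LipschitzWith.of_dist_le_mul
          intro a b
          rw [Real.dist_eq, dist_eq_norm, Real.coe_toNNReal _ hf.lip_pos.le]
          exact h1 a b
        exact this.continuous
    · intro ξ
      exact Measurable.ite hSm measurable_const (hf.meas ξ)
  have h2 : Measurable (fun x => u (g x) x) := hu.comp (hg.prodMk measurable_id)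
  refine ⟨_, h2.stronglyMeasurable, ?_⟩
  have : ∀ᵐ x ∂(volume : Measure (EN N)), x ∉ S := by
    rw [ae_iff]; simpa using hS0
  filter_upwards [this] with x hx
  simp [u, hx]

/-! ### Boxes -/

def oBox {N : ℕ} (a b : Fin N → ℝ) : Set (EN N) := {x | ∀ i, x i ∈ Ioo (a i) (b i)}
def hBox {N : ℕ} (a b : Fin N → ℝ) : Set (EN N) := {x | ∀ i, x i ∈ Ico (a i) (b i)}
def cBox {N : ℕ} (a b : Fin N → ℝ) : Set (EN N) := {x | ∀ i, x i ∈ Icc (a i) (b i)}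

theorem isOpen_oBox {N : ℕ} (a b : Fin N → ℝ) : IsOpen (oBox a b) := by
  have : oBox a b = ⋂ i, (fun x : EN N => x i) ⁻¹' Ioo (a i) (b i) := by
    ext x; simp [oBox]
  rw [this]
  exact isOpen_iInter_of_finite fun i => isOpen_Ioo.preimage (by fun_prop)

theorem isClosed_cBox {N : ℕ} (a b : Fin N → ℝ) : IsClosed (cBox a b) := by
  have : cBox a b = ⋂ i, (fun x : EN N => x i) ⁻¹' Icc (a i) (b i) := by
    ext x; simp [cBox]
  rw [this]
  exact isClosed_iInter fun i => isClosed_Icc.preimage (by fun_prop)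

theorem measurableSet_hBox {N : ℕ} (a b : Fin N → ℝ) : MeasurableSet (hBox a b) := by
  have : hBox a b = ⋂ i, (fun x : EN N => x i) ⁻¹' Ico (a i) (b i) := by
    ext x; simp [hBox]
  rw [this]
  refine MeasurableSet.iInter fun i => measurableSet_Ico.preimage ?_
  have : Continuous (fun x : EN N => x i) := by fun_prop
  exact this.measurable

theorem hBox_ae {N : ℕ} (a b : Fin N → ℝ) : hBox a b =ᵐ[volume] cBox a b := by
  have h := (EuclideanSpace.volume_preserving_symm_measurableEquiv_toLp
    (Fin N)).quasiMeasurePreserving.preimage_ae_eq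
    (Measure.univ_pi_Ico_ae_eq_Icc (μ := fun _ : Fin N => (volume : Measure ℝ)) (f := a) (g := b))
  have e1 : (⇑(MeasurableEquiv.toLp 2 (Fin N → ℝ)).symm) ⁻¹' (univ.pi fun i => Ico (a i) (b i))
      = hBox a b := by
    ext x; simp [hBox]
  have e2 : (⇑(MeasurableEquiv.toLp 2 (Fin N → ℝ)).symm) ⁻¹' (Icc a b)
      = cBox a b := by
    ext x; simp [cBox, Pi.le_def, forall_and]
  rw [e1, e2] at h
  exact h

theorem oBox_ae {N : ℕ} (a b : Fin N → ℝ) : oBox a b =ᵐ[volume] cBox a b := by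
  have h := (EuclideanSpace.volume_preserving_symm_measurableEquiv_toLp
    (Fin N)).quasiMeasurePreserving.preimage_ae_eq
    (Measure.univ_pi_Ioo_ae_eq_Icc (μ := fun _ : Fin N => (volume : Measure ℝ)) (f := a) (g := b))
  have e1 : (⇑(MeasurableEquiv.toLp 2 (Fin N → ℝ)).symm) ⁻¹' (univ.pi fun i => Ioo (a i) (b i))
      = oBox a b := by
    ext x; simp [oBox]
  have e2 : (⇑(MeasurableEquiv.toLp 2 (Fin N → ℝ)).symm) ⁻¹' (Icc a b)
      = cBox a b := by
    ext x; simp [cBox, Pi.le_def, forall_and]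
  rw [e1, e2] at h
  exact h

theorem volume_oBox {N : ℕ} (a b : Fin N → ℝ) :
    volume (oBox a b) = ∏ i, ENNReal.ofReal (b i - a i) := by
  have e1 : (⇑(MeasurableEquiv.toLp 2 (Fin N → ℝ)).symm) ⁻¹' (univ.pi fun i => Ioo (a i) (b i))
      = oBox a b := by
    ext x; simp [oBox]
  rw [← e1, (EuclideanSpace.volume_preserving_symm_measurableEquiv_toLp
    (Fin N)).measure_preimage_equiv, Real.volume_pi_Ioo]

theorem posCube_eq (N : ℕ) (t : ℝ) : posCube N t = oBox (fun _ => 0) (fun _ => t) := rfl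
theorem unitCube_eq (N : ℕ) : unitCube N = oBox (fun _ => -(1/2)) (fun _ => 1/2) := rfl

theorem volume_posCube (N : ℕ) (t : ℝ) : volume (posCube N t) = ENNReal.ofReal t ^ N := by
  simp [posCube_eq, volume_oBox]

theorem volume_unitCube (N : ℕ) : volume (unitCube N) = 1 := by
  rw [unitCube_eq, volume_oBox]; norm_num

theorem isOpen_posCube (N : ℕ) (t : ℝ) : IsOpen (posCube N t) := isOpen_oBox _ _
theorem isOpen_unitCube (N : ℕ) : IsOpen (unitCube N) := isOpen_oBox _ _

/-- The vector `(1/2,…,1/2)`. -/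
noncomputable def halfVec (N : ℕ) : EN N := WithLp.toLp 2 (fun _ => (1/2 : ℝ))

/-- Integer corner. -/
noncomputable def cor {N : ℕ} (n : ℕ) {k : ℕ} (i : Fin N → Fin k) : EN N :=
  WithLp.toLp 2 (fun j => ((n * (i j : ℕ) : ℕ) : ℝ))

open scoped Pointwise in
theorem cov_cube {N : ℕ} {T : ℝ} (hT : 0 < T) (G : EN N → ℝ) :
    ∫ x in posCube N T, G (T⁻¹ • x - halfVec N) = T ^ N * ∫ y in unitCube N, G y := by
  have h1 := Measure.setIntegral_comp_smul (volume : Measure (EN N))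
    (fun y => G (y - halfVec N)) (posCube N T) (inv_ne_zero hT.ne')
  rw [h1]
  have h2 : (T⁻¹ • posCube N T : Set (EN N)) = (fun y => y - halfVec N) ⁻¹' (unitCube N) := by
    ext y
    rw [Set.mem_smul_set_iff_inv_smul_mem₀ (inv_ne_zero hT.ne')]
    simp only [posCube, unitCube, halfVec, Set.mem_ofPred_eq, inv_inv, Set.mem_preimage]
    refine forall_congr' fun i => ?_
    simp only [PiLp.smul_apply, PiLp.sub_apply, smul_eq_mul, mem_Ioo]
    constructor
    · rintro ⟨h, h'⟩
      constructor <;> nlinarith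
    · rintro ⟨h, h'⟩
      constructor <;> nlinarith
  have h3 : MeasurePreserving (fun y : EN N => y - halfVec N) volume volume :=
    measurePreserving_sub_right volume (halfVec N)
  rw [h2, h3.setIntegral_preimage_emb (MeasurableEquiv.subRight (halfVec N)).measurableEmbedding]
  simp [abs_of_pos hT]

theorem cov_cube_int {N : ℕ} {T : ℝ} (hT : 0 < T) {G : EN N → ℝ}
    (hG : IntegrableOn G (unitCube N)) :
    IntegrableOn (fun x => G (T⁻¹ • x - halfVec N)) (posCube N T) := by
  have h3 : MeasurePreserving (fun y : EN N => y - halfVec N) volume volume :=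
    measurePreserving_sub_right volume (halfVec N)
  have h4 : Integrable (fun y => (unitCube N).indicator G (y - halfVec N)) volume :=
    h3.integrable_comp_of_integrable
      ((integrable_indicator_iff (isOpen_unitCube N).measurableSet).2 hG)
  have h5 := h4.comp_smul (inv_ne_zero hT.ne')
  refine h5.integrableOn.congr_fun ?_ (isOpen_posCube N T).measurableSet
  intro x hx
  have : T⁻¹ • x - halfVec N ∈ unitCube N := by
    intro i
    have := hx i
    simp only [halfVec, PiLp.smul_apply, PiLp.sub_apply, smul_eq_mul, mem_Ioo] at this ⊢
    have h1 : 0 < T⁻¹ * x i := mul_pos (inv_pos.2 hT) this.1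
    have h2 : T⁻¹ * x i < 1 := by rw [inv_mul_lt_iff₀ hT]; linarith [this.2]
    constructor <;> linarith
  simp [Set.indicator_of_mem this]

/-- Decomposition of the integral over the big cube. -/
theorem integral_split {N : ℕ} {k n : ℕ} (hn : 0 < n) {H : EN N → ℝ}
    (hH : IntegrableOn H (posCube N ((k * n : ℕ) : ℝ))) :
    (∀ i : Fin N → Fin k, IntegrableOn H ((fun x => x - cor n i) ⁻¹' posCube N n)) ∧
    ∫ x in posCube N ((k * n : ℕ) : ℝ), H x =
      ∑ i : Fin N → Fin k, ∫ x in (fun x => x - cor n i) ⁻¹' posCube N n, H x := by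
  let B : (Fin N → Fin k) → Set (EN N) := fun i =>
    hBox (fun j => ((n * (i j : ℕ) : ℕ) : ℝ)) (fun j => ((n * (i j : ℕ) : ℕ) : ℝ) + n)
  have hB : ∀ i, ((fun x => x - cor n i) ⁻¹' posCube N n : Set (EN N)) =ᵐ[volume] B i := by
    intro i
    have e : ((fun x => x - cor n i) ⁻¹' posCube N n : Set (EN N)) =
      oBox (fun j => ((n * (i j : ℕ) : ℕ) : ℝ)) (fun j => ((n * (i j : ℕ) : ℕ) : ℝ) + n) := by
      ext x
      simp only [posCube, oBox, cor, mem_preimage, mem_ofPred_eq, PiLp.sub_apply, mem_Ioo]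
      refine forall_congr' fun j => ?_
      constructor <;> rintro ⟨h1, h2⟩ <;> constructor <;> linarith
    rw [e]
    exact (oBox_ae _ _).trans (hBox_ae _ _).symm
  have hn' : (0 : ℝ) < n := by exact_mod_cast hn
  have hU : hBox (fun _ : Fin N => (0 : ℝ)) (fun _ => ((k * n : ℕ) : ℝ)) = ⋃ i, B i := by
    ext x
    simp only [hBox, mem_ofPred_eq, mem_iUnion, B, mem_Ico]
    constructor
    · intro hx
      have hk : ∀ j, ⌊x j / n⌋₊ < k := by
        intro j
        rw [Nat.floor_lt (div_nonneg (hx j).1 hn'.le), div_lt_iff₀ hn']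
        exact_mod_cast (hx j).2
      refine ⟨fun j => ⟨⌊x j / n⌋₊, hk j⟩, fun j => ?_⟩
      have h1 := Nat.floor_le (div_nonneg (hx j).1 hn'.le)
      have h2 := Nat.lt_floor_add_one (x j / n)
      rw [le_div_iff₀ hn'] at h1
      rw [div_lt_iff₀ hn'] at h2
      push_cast
      constructor <;> linarith
    · rintro ⟨i, hi⟩ j
      obtain ⟨h1, h2⟩ := hi j
      refine ⟨le_trans (by positivity) h1, lt_of_lt_of_le h2 ?_⟩
      have : n * (i j : ℕ) + n ≤ k * n := by
        have := (i j).2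
        nlinarith
      exact_mod_cast this
  have hdisj : Pairwise (Function.onFun Disjoint B) := by
    intro i i' hii
    rw [Function.onFun, Set.disjoint_left]
    intro x hx hx'
    apply hii
    funext j
    have h1 := hx j
    have h2 := hx' j
    simp only [mem_Ico] at h1 h2
    have a1 : n * (i j : ℕ) < n * (i' j : ℕ) + n := by exact_mod_cast h1.1.trans_lt h2.2
    have a2 : n * (i' j : ℕ) < n * (i j : ℕ) + n := by exact_mod_cast h2.1.trans_lt h1.2
    apply Fin.ext
    have b1 : (i j : ℕ) < i' j + 1 := by
      by_contra hc
      push Not at hc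
      nlinarith
    have b2 : (i' j : ℕ) < i j + 1 := by
      by_contra hc
      push Not at hc
      nlinarith
    omega
  have hbig : posCube N ((k * n : ℕ) : ℝ) =ᵐ[volume] ⋃ i, B i := by
    rw [← hU, posCube_eq]
    exact (oBox_ae _ _).trans (hBox_ae _ _).symm
  have hH' : IntegrableOn H (⋃ i, B i) := hH.congr_set_ae hbig.symm
  have hHi : ∀ i, IntegrableOn H (B i) := fun i => hH'.mono_set (subset_iUnion _ _)
  refine ⟨fun i => (hHi i).congr_set_ae (hB i), ?_⟩
  rw [setIntegral_congr_set hbig, integral_iUnion_fintype (fun i => measurableSet_hBox _ _) hdisj hHi]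
  exact Finset.sum_congr rfl fun i _ => (setIntegral_congr_set (hB i)).symm


/-! ### Cell problems -/

section Cells

variable {N d : ℕ} {f : EN N → Mat d N → ℝ} {α β L : ℝ} {M : Set (EN d)} {s : EN d}
  {V : Submodule ℝ (EN d)}

theorem Std.integrableOn (hf : StdIntegrand N d f α β L)
    {g : EN N → Mat d N} (hg : Measurable g) {C : ℝ} (hC : ∀ x, ‖g x‖ ≤ C) {A : Set (EN N)}
    (hA : volume A ≠ ⊤) : IntegrableOn (fun x => f x (g x)) A := by
  have hβ : 0 < β := hf.alpha_pos.trans_le hf.alpha_le_beta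
  refine Measure.integrableOn_of_bounded (M := β * (1 + C)) hA (Std.aesm hf hg) ?_
  refine ae_restrict_of_ae ?_
  filter_upwards [hf.growth] with x hx
  rw [Real.norm_eq_abs, abs_of_nonneg (hf.nonneg _ _)]
  refine (hx (g x)).2.trans ?_
  have := hC x
  gcongr

theorem meas_add_fderiv (ζ : Mat d N) (ψ : EN N → EN d) :
    Measurable (fun x => ζ + fderiv ℝ ψ x) :=
  (measurable_fderiv ℝ ψ).const_add ζ

theorem bound_add_fderiv (ζ : Mat d N) {ψ : EN N → EN d} {K : ℝ≥0} (hψ : LipschitzWith K ψ)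
    (x : EN N) : ‖ζ + fderiv ℝ ψ x‖ ≤ ‖ζ‖ + K :=
  (norm_add_le _ _).trans (by gcongr; exact norm_fderiv_le_of_lipschitz ℝ hψ)

theorem volume_posCube_ne_top (N : ℕ) (t : ℝ) : volume (posCube N t) ≠ ⊤ := by
  rw [volume_posCube]; exact ENNReal.pow_ne_top ENNReal.ofReal_ne_top

theorem volume_real_posCube (N : ℕ) {t : ℝ} (ht : 0 ≤ t) : volume.real (posCube N t) = t ^ N := by
  rw [measureReal_def, volume_posCube, ENNReal.toReal_pow, ENNReal.toReal_ofReal ht]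

theorem Std.cell_int (hf : StdIntegrand N d f α β L) (ζ : Mat d N) {ψ : EN N → EN d} {K : ℝ≥0}
    (hψ : LipschitzWith K ψ) (t : ℝ) :
    IntegrableOn (fun x => f x (ζ + fderiv ℝ ψ x)) (posCube N t) :=
  Std.integrableOn hf (meas_add_fderiv ζ ψ) (bound_add_fderiv ζ hψ) (volume_posCube_ne_top N t)

theorem cell_bdd (hf : StdIntegrand N d f α β L) (ζ : Mat d N) {t : ℝ} (ht : 0 ≤ t) :
    ∀ c ∈ {c : ℝ | ∃ (φ : EN N → EN d) (K : ℝ≥0), LipschitzWith K φ ∧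
    (∀ x, φ x ∈ TangentSet M s) ∧ (∀ x, x ∉ posCube N t → φ x = 0) ∧
    c = (t ^ N)⁻¹ * ∫ x in posCube N t, f x (ζ + fderiv ℝ φ x)}, 0 ≤ c := by
  rintro c ⟨φ, K, -, -, -, rfl⟩
  exact mul_nonneg (by positivity) (integral_nonneg fun x => hf.nonneg _ _)

theorem cell_le (hf : StdIntegrand N d f α β L) (ζ : Mat d N) {t : ℝ} (ht : 0 ≤ t)
    {ψ : EN N → EN d} {K : ℝ≥0} (hψ : LipschitzWith K ψ) (hT : ∀ x, ψ x ∈ TangentSet M s)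
    (h0 : ∀ x, x ∉ posCube N t → ψ x = 0) :
    tanCell f M s ζ t ≤ (t ^ N)⁻¹ * ∫ x in posCube N t, f x (ζ + fderiv ℝ ψ x) :=
  csInf_le ⟨0, cell_bdd hf ζ ht⟩ ⟨ψ, K, hψ, hT, h0, rfl⟩

theorem cell_exists (hV : TangentSet M s = V) (ζ : Mat d N) {t : ℝ} {c : ℝ}
    (hc : tanCell f M s ζ t < c) :
    ∃ (ψ : EN N → EN d) (K : ℝ≥0), LipschitzWith K ψ ∧ (∀ x, ψ x ∈ TangentSet M s) ∧
      (∀ x, x ∉ posCube N t → ψ x = 0) ∧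
      (t ^ N)⁻¹ * ∫ x in posCube N t, f x (ζ + fderiv ℝ ψ x) < c := by
  have hne : {c : ℝ | ∃ (φ : EN N → EN d) (K : ℝ≥0), LipschitzWith K φ ∧
    (∀ x, φ x ∈ TangentSet M s) ∧ (∀ x, x ∉ posCube N t → φ x = 0) ∧
    c = (t ^ N)⁻¹ * ∫ x in posCube N t, f x (ζ + fderiv ℝ φ x)}.Nonempty :=
    ⟨_, fun _ => 0, 0, LipschitzWith.const 0, fun x => by rw [hV]; exact V.zero_mem,
      fun _ _ => rfl, rfl⟩
  obtain ⟨c', ⟨ψ, K, h1, h2, h3, rfl⟩, hlt⟩ := exists_lt_of_csInf_lt hne hc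
  exact ⟨ψ, K, h1, h2, h3, hlt⟩

theorem cell_nonneg (hf : StdIntegrand N d f α β L) (ζ : Mat d N) {t : ℝ} (ht : 0 ≤ t) :
    0 ≤ tanCell f M s ζ t := Real.sInf_nonneg (cell_bdd hf ζ ht)

theorem cell_le_bound (hf : StdIntegrand N d f α β L) (hV : TangentSet M s = V) (ζ : Mat d N)
    {t : ℝ} (ht : 0 < t) : tanCell f M s ζ t ≤ β * (1 + ‖ζ‖) := by
  refine (cell_le hf ζ ht.le (ψ := fun _ => 0) (LipschitzWith.const (α := EN N) (0 : EN d))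
    (fun x => by rw [hV]; exact V.zero_mem) (fun _ _ => rfl)).trans ?_
  have h1 : ∫ x in posCube N t, f x (ζ + fderiv ℝ (fun _ : EN N => (0 : EN d)) x) ≤
      ∫ x in posCube N t, β * (1 + ‖ζ‖) := by
    refine integral_mono_ae
      (Std.cell_int hf ζ (LipschitzWith.const (α := EN N) (0 : EN d)) t)
      (integrableOn_const (volume_posCube_ne_top N t)) (ae_restrict_of_ae ?_)
    filter_upwards [hf.growth] with x hx
    simpa using (hx ζ).2
  rw [setIntegral_const, volume_real_posCube N ht.le, smul_eq_mul] at h1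
  rw [inv_mul_le_iff₀ (by positivity)]
  exact h1

theorem cell_lip (hf : StdIntegrand N d f α β L) (hV : TangentSet M s = V) (ζ ζ' : Mat d N)
    {t : ℝ} (ht : 0 < t) : tanCell f M s ζ t ≤ tanCell f M s ζ' t + L * ‖ζ - ζ'‖ := by
  refine le_of_forall_pos_lt_add fun ε hε => ?_
  obtain ⟨ψ, K, h1, h2, h3, h4⟩ := cell_exists (f := f) hV ζ' (t := t)
    (lt_add_of_pos_right (tanCell f M s ζ' t) hε)
  refine (cell_le hf ζ ht.le h1 h2 h3).trans_lt ?_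
  have h5 : ∫ x in posCube N t, f x (ζ + fderiv ℝ ψ x) ≤
      ∫ x in posCube N t, (f x (ζ' + fderiv ℝ ψ x) + L * ‖ζ - ζ'‖) := by
    refine integral_mono_ae (Std.cell_int hf ζ h1 t)
      ((Std.cell_int hf ζ' h1 t).add (integrableOn_const (volume_posCube_ne_top N t)))
      (ae_restrict_of_ae ?_)
    filter_upwards [hf.lip] with x hx
    have := (abs_le.1 (hx (ζ + fderiv ℝ ψ x) (ζ' + fderiv ℝ ψ x))).2
    rw [add_sub_add_right_eq_sub] at this
    linarith
  rw [integral_add (Std.cell_int hf ζ' h1 t) (integrableOn_const (volume_posCube_ne_top N t)),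
    setIntegral_const, volume_real_posCube N ht.le, smul_eq_mul] at h5
  have h6 : (t ^ N)⁻¹ * ∫ x in posCube N t, f x (ζ + fderiv ℝ ψ x) ≤
      (t ^ N)⁻¹ * (∫ x in posCube N t, f x (ζ' + fderiv ℝ ψ x)) + L * ‖ζ - ζ'‖ := by
    have hp : 0 < t ^ N := by positivity
    have := mul_le_mul_of_nonneg_left h5 (inv_nonneg.2 hp.le)
    rw [mul_add, inv_mul_cancel_left₀ hp.ne'] at this
    exact this
  linarith

theorem periodic_cor (hf : StdIntegrand N d f α β L) {k : ℕ} (n : ℕ) (i : Fin N → Fin k)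
    (y : EN N) (ξ : Mat d N) : f (y + cor n i) ξ = f y ξ := by
  have h1 : ∀ (j : Fin N) (m : ℕ) (y : EN N),
      f (y + m • EuclideanSpace.single j (1 : ℝ)) ξ = f y ξ := by
    intro j m
    induction m with
    | zero => intro y; simp
    | succ m ih =>
      intro y
      rw [succ_nsmul, ← add_assoc, hf.periodic, ih]
  have h2 : ∀ (S : Finset (Fin N)) (y : EN N),
      f (y + ∑ j ∈ S, (n * (i j : ℕ)) • EuclideanSpace.single j (1 : ℝ)) ξ = f y ξ := by
    intro S
    classical
    induction S using Finset.induction_on with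
    | empty => intro y; simp
    | insert a S ha ih =>
      intro y
      rw [Finset.sum_insert ha, ← add_assoc, ih, h1]
  have h3 : cor n i = ∑ j, (n * (i j : ℕ)) • EuclideanSpace.single j (1 : ℝ) := by
    ext l
    simp [cor, Finset.sum_apply, Pi.single_apply]
  rw [h3, h2]

/-- Extension from a small cube to a larger one. -/
theorem cell_extend (hf : StdIntegrand N d f α β L) (hV : TangentSet M s = V) (ζ : Mat d N)
    {r t : ℝ} (hr : 0 < r) (hrt : r ≤ t) :
    t ^ N * tanCell f M s ζ t ≤
      r ^ N * tanCell f M s ζ r + (t ^ N - r ^ N) * (β * (1 + ‖ζ‖)) := by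
  have ht : 0 < t := hr.trans_le hrt
  have hrN : 0 < r ^ N := by positivity
  have htN : 0 < t ^ N := by positivity
  refine le_of_forall_pos_lt_add fun ε hε => ?_
  obtain ⟨ψ, K, h1, h2, h3, h4⟩ := cell_exists (f := f) hV ζ (t := r)
    (lt_add_of_pos_right (tanCell f M s ζ r) (div_pos hε hrN))
  have hsub : posCube N r ⊆ posCube N t := fun x hx i => ⟨(hx i).1, (hx i).2.trans_le hrt⟩
  have h5 := cell_le hf ζ ht.le h1 h2 (fun x hx => h3 x (fun h => hx (hsub h)))
  have hI := Std.cell_int hf ζ h1 t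
  have hdiff : ∫ x in posCube N t \ posCube N r, f x (ζ + fderiv ℝ ψ x) ≤
      (t ^ N - r ^ N) * (β * (1 + ‖ζ‖)) := by
    have hvol : volume.real (posCube N t \ posCube N r) = t ^ N - r ^ N := by
      rw [measureReal_sdiff hsub (isOpen_posCube N r).measurableSet
        (volume_posCube_ne_top N t), volume_real_posCube N ht.le,
        volume_real_posCube N hr.le]
    have hfin : volume (posCube N t \ posCube N r) ≠ ⊤ :=
      ne_top_of_le_ne_top (volume_posCube_ne_top N t) (measure_mono sdiff_subset)
    have h6 : ∫ x in posCube N t \ posCube N r, f x (ζ + fderiv ℝ ψ x) ≤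
        ∫ x in posCube N t \ posCube N r, β * (1 + ‖ζ‖) := by
      refine integral_mono_ae (hI.mono_set sdiff_subset) (integrableOn_const hfin) ?_
      have hae := oBox_ae (N := N) (fun _ => 0) (fun _ => r)
      rw [← posCube_eq] at hae
      refine (ae_restrict_iff' ((isOpen_posCube N t).measurableSet.diff
        (isOpen_posCube N r).measurableSet)).2 ?_
      filter_upwards [hf.growth, hae.mem_iff] with x hx hxm hxd
      have hxc : x ∉ cBox (N := N) (fun _ => 0) (fun _ => r) := fun h => hxd.2 (hxm.2 h)
      have hev : ψ =ᶠ[𝓝 x] fun _ => 0 := by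
        filter_upwards [(isClosed_cBox (N := N) (fun _ => 0) (fun _ => r)).isOpen_compl.mem_nhds hxc]
          with z hz
        exact h3 z (fun h => hz (fun i => Ioo_subset_Icc_self (h i)))
      rw [hev.fderiv_eq]
      simpa using (hx ζ).2
    rwa [setIntegral_const, hvol, smul_eq_mul] at h6
  have hsplit := setIntegral_sdiff (μ := volume) (isOpen_posCube N r).measurableSet hI hsub
  have h7 : t ^ N * tanCell f M s ζ t ≤ ∫ x in posCube N t, f x (ζ + fderiv ℝ ψ x) := by
    have := mul_le_mul_of_nonneg_left h5 htN.le
    rwa [mul_inv_cancel_left₀ htN.ne'] at this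
  have h8 : ∫ x in posCube N r, f x (ζ + fderiv ℝ ψ x) < r ^ N * tanCell f M s ζ r + ε := by
    rw [inv_mul_lt_iff₀ hrN, mul_add, mul_div_cancel₀ _ hrN.ne'] at h4
    exact h4
  linarith

end Cells


/-! ### The gluing construction -/

theorem cor_unique {N k n : ℕ} {i i' : Fin N → Fin k} {x : EN N}
    (hx : x - cor n i ∈ posCube N n) (hx' : x - cor n i' ∈ posCube N n) : i = i' := by
  funext j
  have h1 := hx j
  have h2 := hx' j
  simp only [cor, PiLp.sub_apply, mem_Ioo] at h1 h2
  have a1 : n * (i j : ℕ) < n * (i' j : ℕ) + n := by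
    have : ((n * (i j : ℕ) : ℕ) : ℝ) < ((n * (i' j : ℕ) : ℕ) : ℝ) + n := by linarith
    exact_mod_cast this
  have a2 : n * (i' j : ℕ) < n * (i j : ℕ) + n := by
    have : ((n * (i' j : ℕ) : ℕ) : ℝ) < ((n * (i j : ℕ) : ℕ) : ℝ) + n := by linarith
    exact_mod_cast this
  apply Fin.ext
  have b1 : (i j : ℕ) < i' j + 1 := by
    by_contra hc
    push Not at hc
    nlinarith
  have b2 : (i' j : ℕ) < i j + 1 := by
    by_contra hc
    push Not at hc
    nlinarith
  omega

theorem cor_sub {N k n : ℕ} {i : Fin N → Fin k} {x : EN N}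
    (hx : x - cor n i ∈ posCube N n) : x ∈ posCube N ((k * n : ℕ) : ℝ) := by
  intro j
  have h1 := hx j
  simp only [cor, PiLp.sub_apply, mem_Ioo] at h1 ⊢
  have : n * (i j : ℕ) + n ≤ k * n := by
    have := (i j).2
    nlinarith
  have h3 : ((n * (i j : ℕ) : ℕ) : ℝ) + n ≤ ((k * n : ℕ) : ℝ) := by exact_mod_cast this
  have h4 : (0 : ℝ) ≤ ((n * (i j : ℕ) : ℕ) : ℝ) := by positivity
  constructor <;> linarith

theorem unit_to_pos {N : ℕ} {T : ℝ} (hT : 0 < T) {x : EN N}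
    (hx : T⁻¹ • x - halfVec N ∈ unitCube N) : x ∈ posCube N T := by
  intro i
  have := hx i
  simp only [halfVec, PiLp.smul_apply, PiLp.sub_apply, smul_eq_mul, mem_Ioo] at this ⊢
  constructor
  · by_contra hc
    push Not at hc
    have : T⁻¹ * x i ≤ 0 := mul_nonpos_of_nonneg_of_nonpos (inv_pos.2 hT).le hc
    linarith
  · have h2 : T⁻¹ * x i < 1 := by linarith
    rw [inv_mul_lt_iff₀ hT] at h2
    linarith

theorem lip_sum {N d : ℕ} {ι : Type*} (S : Finset ι) (ψ : ι → EN N → EN d)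
    (h : ∀ i, ∃ K : ℝ≥0, LipschitzWith K (ψ i)) :
    ∃ K : ℝ≥0, LipschitzWith K (fun x => ∑ i ∈ S, ψ i x) := by
  classical
  induction S using Finset.induction_on with
  | empty => exact ⟨0, by simp⟩
  | insert a S ha ih =>
    obtain ⟨K, hK⟩ := ih
    obtain ⟨K', hK'⟩ := h a
    exact ⟨K' + K, by simpa [Finset.sum_insert ha] using hK'.add hK⟩

section Key

variable {N d : ℕ} {f : EN N → Mat d N → ℝ} {α β L : ℝ} {M : Set (EN d)} {s : EN d}
  {V : Submodule ℝ (EN d)}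

theorem lip_scale {φ : EN N → EN d} {K : ℝ≥0} (hφ : LipschitzWith K φ) (T : ℝ) :
    ∃ K' : ℝ≥0, LipschitzWith K' (fun x => T • φ (T⁻¹ • x - halfVec N)) := by
  have h1 : LipschitzWith ‖T⁻¹‖₊ (fun x : EN N => T⁻¹ • x - halfVec N) := by
    simpa using (lipschitzWith_smul (β := EN N) T⁻¹).sub (LipschitzWith.const (halfVec N))
  exact ⟨_, (lipschitzWith_smul T).comp (hφ.comp h1)⟩

theorem fderiv_scale (φ : EN N → EN d) {T : ℝ} (hT : T ≠ 0) (x : EN N) :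
    fderiv ℝ (fun x => T • φ (T⁻¹ • x - halfVec N)) x = fderiv ℝ φ (T⁻¹ • x - halfVec N) := by
  have h1 : fderiv ℝ (fun x => T • φ (T⁻¹ • x - halfVec N)) x
      = T • fderiv ℝ (fun x => φ (T⁻¹ • x - halfVec N)) x := by
    exact congrFun (fderiv_const_smul_field (𝕜 := ℝ) (R := ℝ)
      (f := fun x : EN N => φ (T⁻¹ • x - halfVec N)) T) x
  rw [h1]
  have h2 := fderiv_comp_smul (𝕜 := ℝ) (f := fun y => φ (y - halfVec N)) (x := x) T⁻¹
  rw [h2, fderiv_comp_sub, smul_smul, mul_inv_cancel₀ hT, one_smul]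

theorem key (hf : StdIntegrand N d f α β L) (hV : TangentSet M s = V) {k n : ℕ} (hk : 0 < k)
    (hn : 0 < n) (ξ : Mat d N) {φ : EN N → EN d} {K : ℝ≥0} (hφ : LipschitzWith K φ)
    (hφT : ∀ x, φ x ∈ TangentSet M s) (hφ0 : ∀ x, x ∉ unitCube N → φ x = 0)
    (ζ : (Fin N → Fin k) → Mat d N) (c : (Fin N → Fin k) → ℝ)
    (hc : ∀ i, tanCell f M s (ζ i) n < c i) {G : EN N → ℝ} (hG : IntegrableOn G (unitCube N))
    (hGle : ∀ i x, x - cor n i ∈ posCube N n →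
      c i + L * ‖ξ + fderiv ℝ φ ((((k * n : ℕ) : ℝ))⁻¹ • x - halfVec N) - ζ i‖ ≤
        G ((((k * n : ℕ) : ℝ))⁻¹ • x - halfVec N)) :
    tanCell f M s ξ ((k * n : ℕ) : ℝ) ≤ ∫ y in unitCube N, G y := by
  set T : ℝ := ((k * n : ℕ) : ℝ) with hTdef
  have hT : 0 < T := by rw [hTdef]; exact_mod_cast Nat.mul_pos hk hn
  have hn' : (0 : ℝ) < n := by exact_mod_cast hn
  have hex := fun i => cell_exists (f := f) hV (ζ i) (hc i)
  choose ψ Kψ h1 h2 h3 h4 using hex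
  have hψt : ∀ i, ∃ K' : ℝ≥0, LipschitzWith K' (fun x => ψ i (x - cor n i)) := by
    intro i
    refine ⟨Kψ i, fun x y => ?_⟩
    simpa using h1 i (x - cor n i) (y - cor n i)
  obtain ⟨K1, hK1⟩ := lip_scale hφ T
  obtain ⟨K2, hK2⟩ := lip_sum Finset.univ _ hψt
  let u : EN N → EN d := fun x => T • φ (T⁻¹ • x - halfVec N) + ∑ i, ψ i (x - cor n i)
  have hu : LipschitzWith (K1 + K2) u := hK1.add hK2
  have huT : ∀ x, u x ∈ TangentSet M s := by
    intro x
    rw [hV] at *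
    exact V.add_mem (V.smul_mem _ (hφT _)) (V.sum_mem fun i _ => h2 i _)
  have hu0 : ∀ x, x ∉ posCube N T → u x = 0 := by
    intro x hx
    have e1 : φ (T⁻¹ • x - halfVec N) = 0 := hφ0 _ fun h => hx (unit_to_pos hT h)
    have e2 : ∀ i, ψ i (x - cor n i) = 0 := fun i => h3 i _ fun h => hx (cor_sub h)
    simp [u, e1, e2]
  refine (cell_le hf ξ hT.le hu huT hu0).trans ?_
  rw [inv_mul_le_iff₀ (by positivity), ← cov_cube hT G]
  obtain ⟨hI1, hS1⟩ := integral_split hn (Std.cell_int hf ξ hu T)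
  obtain ⟨hI2, hS2⟩ := integral_split hn (cov_cube_int hT hG)
  rw [hS1, hS2]
  refine Finset.sum_le_sum fun i _ => ?_
  have hmp : MeasurePreserving (fun x : EN N => x - cor n i) volume volume :=
    measurePreserving_sub_right volume (cor n i)
  have hemb := (MeasurableEquiv.subRight (cor n i)).measurableEmbedding
  have hper : ∀ x : EN N, f x (ζ i + fderiv ℝ (ψ i) (x - cor n i)) =
      (fun z => f z (ζ i + fderiv ℝ (ψ i) z)) (x - cor n i) := by
    intro x
    have := periodic_cor hf n i (x - cor n i) (ζ i + fderiv ℝ (ψ i) (x - cor n i))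
    rw [sub_add_cancel] at this
    exact this
  have hIntegA : ∫ x in (fun x => x - cor n i) ⁻¹' posCube N n,
      f x (ζ i + fderiv ℝ (ψ i) (x - cor n i)) =
      ∫ z in posCube N n, f z (ζ i + fderiv ℝ (ψ i) z) := by
    simp_rw [hper]
    exact hmp.setIntegral_preimage_emb hemb (fun z => f z (ζ i + fderiv ℝ (ψ i) z)) _
  have hvolr : volume.real ((fun x => x - cor n i) ⁻¹' posCube N n) = (n : ℝ) ^ N := by
    rw [measureReal_def, hmp.measure_preimage (isOpen_posCube N n).measurableSet.nullMeasurableSet,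
      ← measureReal_def, volume_real_posCube N hn'.le]
  have hvol : volume ((fun x => x - cor n i) ⁻¹' posCube N n) ≠ ⊤ := by
    rw [hmp.measure_preimage (isOpen_posCube N n).measurableSet.nullMeasurableSet]
    exact volume_posCube_ne_top N n
  have hIntegB : IntegrableOn (fun x => f x (ζ i + fderiv ℝ (ψ i) (x - cor n i)))
      ((fun x => x - cor n i) ⁻¹' posCube N n) := by
    simp_rw [hper]
    exact (hmp.integrableOn_comp_preimage hemb).2 (Std.cell_int hf (ζ i) (h1 i) n)
  -- the pointwise inequality
  have hpt : ∫ x in (fun x => x - cor n i) ⁻¹' posCube N n, f x (ξ + fderiv ℝ u x) ≤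
      ∫ x in (fun x => x - cor n i) ⁻¹' posCube N n,
        (f x (ζ i + fderiv ℝ (ψ i) (x - cor n i)) + (G (T⁻¹ • x - halfVec N) - c i)) := by
    refine integral_mono_ae (hI1 i) (hIntegB.add ((hI2 i).sub (integrableOn_const hvol))) ?_
    have hmeas : MeasurableSet ((fun x => x - cor n i) ⁻¹' posCube N n) :=
      hmp.measurable (isOpen_posCube N n).measurableSet
    refine (ae_restrict_iff' hmeas).2 ?_
    obtain ⟨K3, hK3⟩ := hψt i
    filter_upwards [hf.lip, hK1.ae_differentiableAt, hK3.ae_differentiableAt] with x hx hd1 hd2 hxm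
    have hev : u =ᶠ[𝓝 x] fun x => T • φ (T⁻¹ • x - halfVec N) + ψ i (x - cor n i) := by
      have hop : IsOpen ((fun x => x - cor n i) ⁻¹' posCube N n) :=
        (isOpen_posCube N n).preimage (by fun_prop)
      filter_upwards [hop.mem_nhds hxm] with z hz
      simp only [u]
      congr 1
      refine Finset.sum_eq_single i (fun j _ hj => h3 j _ fun h => hj (cor_unique h hz)) ?_
      simp
    have hfd : fderiv ℝ u x =
        fderiv ℝ φ (T⁻¹ • x - halfVec N) + fderiv ℝ (ψ i) (x - cor n i) := by
      rw [hev.fderiv_eq, fderiv_fun_add hd1 hd2, fderiv_scale φ hT.ne', fderiv_comp_sub]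
    have h5 := (abs_le.1 (hx (ξ + fderiv ℝ u x) (ζ i + fderiv ℝ (ψ i) (x - cor n i)))).2
    have h6 : ξ + fderiv ℝ u x - (ζ i + fderiv ℝ (ψ i) (x - cor n i)) =
        ξ + fderiv ℝ φ (T⁻¹ • x - halfVec N) - ζ i := by
      rw [hfd]; abel
    rw [h6] at h5
    have h7 := hGle i x hxm
    linarith
  refine hpt.trans ?_
  have hcI : IntegrableOn (fun _ : EN N => c i) ((fun x => x - cor n i) ⁻¹' posCube N n) :=
    integrableOn_const hvol
  have hsubI : IntegrableOn (fun x : EN N => G (T⁻¹ • x - halfVec N) - c i)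
      ((fun x => x - cor n i) ⁻¹' posCube N n) := (hI2 i).sub hcI
  rw [integral_add hIntegB hsubI,
    integral_sub (hI2 i) hcI, setIntegral_const, hvolr, hIntegA, smul_eq_mul]
  have h8 := h4 i
  rw [inv_mul_lt_iff₀ (by positivity)] at h8
  linarith

end Key


/-! ### Properties of the homogenized density -/

section Hom

variable {N d : ℕ} {f : EN N → Mat d N → ℝ} {α β L : ℝ} {M : Set (EN d)} {s : EN d}
  {V : Submodule ℝ (EN d)}

theorem hom_bdd (hf : StdIntegrand N d f α β L) (hV : TangentSet M s = V) (ζ : Mat d N) :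
    IsBoundedUnder (· ≤ ·) atTop (fun t => tanCell f M s ζ t) :=
  isBoundedUnder_of_eventually_le (a := β * (1 + ‖ζ‖)) (by
    filter_upwards [eventually_gt_atTop (0 : ℝ)] with t ht
    exact cell_le_bound hf hV ζ ht)

theorem hom_cobdd (hf : StdIntegrand N d f α β L) (ζ : Mat d N) :
    IsCoboundedUnder (· ≤ ·) atTop (fun t => tanCell f M s ζ t) := by
  have : IsBoundedUnder (· ≥ ·) atTop (fun t => tanCell f M s ζ t) :=
    isBoundedUnder_of_eventually_ge (a := 0) (by
      filter_upwards [eventually_gt_atTop (0 : ℝ)] with t ht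
      exact cell_nonneg hf ζ ht.le)
  exact this.isCoboundedUnder_le

theorem hom_nonneg (hf : StdIntegrand N d f α β L) (hV : TangentSet M s = V) (ζ : Mat d N) :
    0 ≤ Tfhom f M s ζ := by
  refine le_limsup_of_frequently_le (Eventually.frequently ?_) (hom_bdd hf hV ζ)
  filter_upwards [eventually_gt_atTop (0 : ℝ)] with t ht
  exact cell_nonneg hf ζ ht.le

theorem hom_le_bound (hf : StdIntegrand N d f α β L) (hV : TangentSet M s = V) (ζ : Mat d N) :
    Tfhom f M s ζ ≤ β * (1 + ‖ζ‖) := by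
  refine limsup_le_of_le (hom_cobdd hf ζ) ?_
  filter_upwards [eventually_gt_atTop (0 : ℝ)] with t ht
  exact cell_le_bound hf hV ζ ht

theorem hom_eventually (hf : StdIntegrand N d f α β L) (hV : TangentSet M s = V) (ζ : Mat d N)
    {c : ℝ} (hc : Tfhom f M s ζ < c) : ∀ᶠ t in atTop, tanCell f M s ζ t < c :=
  eventually_lt_of_limsup_lt hc (hom_bdd hf hV ζ)

theorem hom_lip (hf : StdIntegrand N d f α β L) (hV : TangentSet M s = V) (ζ ζ' : Mat d N) :
    Tfhom f M s ζ ≤ Tfhom f M s ζ' + L * ‖ζ - ζ'‖ := by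
  refine le_of_forall_pos_le_add fun ε hε => ?_
  refine limsup_le_of_le (hom_cobdd hf ζ) ?_
  filter_upwards [eventually_gt_atTop (0 : ℝ),
    hom_eventually hf hV ζ' (lt_add_of_pos_right _ hε)] with t ht h
  have := cell_lip hf hV ζ ζ' ht
  linarith

theorem hom_continuous (hf : StdIntegrand N d f α β L) (hV : TangentSet M s = V) :
    Continuous (fun ζ => Tfhom f M s ζ) := by
  have : LipschitzWith (Real.toNNReal L) (fun ζ => Tfhom f M s ζ) := by
    apply LipschitzWith.of_dist_le_mul
    intro a b
    rw [Real.dist_eq, dist_eq_norm, Real.coe_toNNReal _ hf.lip_pos.le, abs_le]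
    have h1 := hom_lip hf hV a b
    have h2 := hom_lip hf hV b a
    rw [norm_sub_rev b a] at h2
    constructor <;> linarith
  exact this.continuous

theorem volume_unitCube_ne_top (N : ℕ) : volume (unitCube N) ≠ ⊤ := by
  rw [volume_unitCube]; exact ENNReal.one_ne_top

theorem integral_const_unitCube (c : ℝ) : ∫ _ in unitCube N, c = c := by
  rw [setIntegral_const, measureReal_def, volume_unitCube]; simp

theorem hom_le_cell (hf : StdIntegrand N d f α β L) (hV : TangentSet M s = V) (ζ : Mat d N)
    {m : ℕ} (hm : 0 < m) : Tfhom f M s ζ ≤ tanCell f M s ζ m := by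
  have hm' : (0 : ℝ) < m := by exact_mod_cast hm
  have hβ : 0 < β := hf.alpha_pos.trans_le hf.alpha_le_beta
  set C := β * (1 + ‖ζ‖) with hC
  have hC0 : 0 ≤ C := by positivity
  have hmono : ∀ k : ℕ, 0 < k → tanCell f M s ζ ((k * m : ℕ) : ℝ) ≤ tanCell f M s ζ m := by
    intro k hk
    refine le_of_forall_pos_le_add fun ε hε => ?_
    have := key hf hV hk hm ζ (φ := fun _ => 0) (LipschitzWith.const (α := EN N) (0 : EN d))
      (fun x => by rw [hV]; exact V.zero_mem) (fun _ _ => rfl) (fun _ => ζ)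
      (fun _ => tanCell f M s ζ m + ε) (fun _ => lt_add_of_pos_right _ hε)
      (G := fun _ => tanCell f M s ζ m + ε) (integrableOn_const (volume_unitCube_ne_top N))
      (fun i x _ => by simp)
    rwa [integral_const_unitCube] at this
  have hlim : Tendsto (fun t : ℝ => tanCell f M s ζ m + (1 - (1 - m / t) ^ N) * C) atTop
      (𝓝 (tanCell f M s ζ m)) := by
    have h1 : Tendsto (fun t : ℝ => (m : ℝ) / t) atTop (𝓝 0) :=
      tendsto_const_nhds.div_atTop tendsto_id
    have h2 := ((tendsto_const_nhds (x := (1 : ℝ))).sub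
      (((tendsto_const_nhds (x := (1 : ℝ))).sub h1).pow N)).mul_const C
    have h3 := (tendsto_const_nhds (x := tanCell f M s ζ m)).add h2
    simpa using h3
  rw [← hlim.limsup_eq]
  refine limsup_le_limsup ?_ (hom_cobdd hf ζ) hlim.isBoundedUnder_le
  filter_upwards [eventually_ge_atTop (m : ℝ)] with t ht
  have ht0 : 0 < t := hm'.trans_le ht
  set k := ⌊t / m⌋₊ with hk
  have hk1 : 0 < k := Nat.floor_pos.2 ((one_le_div hm').2 ht)
  have hle : ((k * m : ℕ) : ℝ) ≤ t := by
    have := Nat.floor_le (div_nonneg ht0.le hm'.le)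
    rw [le_div_iff₀ hm'] at this
    exact_mod_cast this
  have hge : t - m ≤ ((k * m : ℕ) : ℝ) := by
    have := Nat.lt_floor_add_one (t / m)
    rw [div_lt_iff₀ hm'] at this
    push_cast
    linarith
  have hkm : (0 : ℝ) < ((k * m : ℕ) : ℝ) := by exact_mod_cast Nat.mul_pos hk1 hm
  have h1 := cell_extend hf hV ζ hkm hle
  have htN : 0 < t ^ N := by positivity
  have h2 : ((k * m : ℕ) : ℝ) ^ N * tanCell f M s ζ ((k * m : ℕ) : ℝ) ≤
      t ^ N * tanCell f M s ζ m := by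
    have := hmono k hk1
    have h0 : 0 ≤ tanCell f M s ζ ((k * m : ℕ) : ℝ) := cell_nonneg hf ζ hkm.le
    gcongr
  have h3 : (t - m) ^ N ≤ ((k * m : ℕ) : ℝ) ^ N := by
    have : 0 ≤ t - m := by linarith
    gcongr
  have h4 : (t - m) ^ N = t ^ N * (1 - m / t) ^ N := by
    rw [← mul_pow]; congr 1; field_simp
  rw [← mul_le_mul_iff_right₀ htN]
  rw [h4] at h3
  rw [← hC] at h1
  have h5 : (t ^ N - ((k * m : ℕ) : ℝ) ^ N) * C ≤ (t ^ N - t ^ N * (1 - m / t) ^ N) * C := by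
    gcongr
  linarith

theorem hom_int (hf : StdIntegrand N d f α β L) (hV : TangentSet M s = V) (ξ : Mat d N)
    {φ : EN N → EN d} {K : ℝ≥0} (hφ : LipschitzWith K φ) :
    IntegrableOn (fun y => Tfhom f M s (ξ + fderiv ℝ φ y)) (unitCube N) := by
  have hβ : 0 < β := hf.alpha_pos.trans_le hf.alpha_le_beta
  refine Measure.integrableOn_of_bounded (M := β * (1 + (‖ξ‖ + K))) (volume_unitCube_ne_top N)
    (((hom_continuous hf hV).measurable.comp (meas_add_fderiv ξ φ)).aestronglyMeasurable) ?_
  refine ae_of_all _ fun x => ?_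
  rw [Real.norm_eq_abs, abs_of_nonneg (hom_nonneg hf hV _)]
  refine (hom_le_bound hf hV _).trans ?_
  have := bound_add_fderiv ξ hφ x
  gcongr

theorem pos_to_unit {T : ℝ} (hT : 0 < T) {x : EN N} (hx : x ∈ posCube N T) :
    T⁻¹ • x - halfVec N ∈ unitCube N := by
  intro i
  have := hx i
  simp only [halfVec, PiLp.smul_apply, PiLp.sub_apply, smul_eq_mul, mem_Ioo] at this ⊢
  have h1 : 0 < T⁻¹ * x i := mul_pos (inv_pos.2 hT) this.1
  have h2 : T⁻¹ * x i < 1 := by rw [inv_mul_lt_iff₀ hT]; linarith [this.2]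
  constructor <;> linarith

set_option maxHeartbeats 2000000 in
theorem hom_quasiconvex (hf : StdIntegrand N d f α β L) (hV : TangentSet M s = V) (ξ : Mat d N)
    {φ : EN N → EN d} {K : ℝ≥0} (hφ : LipschitzWith K φ)
    (hφT : ∀ x, φ x ∈ TangentSet M s) (hφ0 : ∀ x, x ∉ unitCube N → φ x = 0) :
    Tfhom f M s ξ ≤ ∫ y in unitCube N, Tfhom f M s (ξ + fderiv ℝ φ y) := by
  refine le_of_forall_pos_le_add fun ε hε => ?_
  have hL := hf.lip_pos
  set δ := ε / (1 + 4 * L) with hδ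
  have hδ0 : 0 < δ := by positivity
  have hQm := (isOpen_unitCube N).measurableSet
  have hDint : IntegrableOn (fderiv ℝ φ) (unitCube N) := by
    refine Measure.integrableOn_of_bounded (M := K) (volume_unitCube_ne_top N)
      (measurable_fderiv ℝ φ).aestronglyMeasurable ?_
    exact ae_of_all _ fun x => norm_fderiv_le_of_lipschitz ℝ hφ
  have : (volume.restrict (unitCube N)).Regular :=
    Measure.Regular.restrict_of_measure_ne_top (volume_unitCube_ne_top N)
  obtain ⟨g, hgc, hgQ, hgcont, hgint⟩ :=
    Integrable.exists_hasCompactSupport_integral_sub_le (μ := volume.restrict (unitCube N))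
      hDint hδ0
  have hguc : UniformContinuous (fun z : Fin N → ℝ => g (WithLp.toLp 2 z)) :=
    (hgcont.uniformContinuous_of_tendsto_cocompact (HasCompactSupport.is_zero_at_infty hgc)).comp (PiLp.uniformContinuous_toLp 2 _)
  obtain ⟨η, hη, hguc⟩ := Metric.uniformContinuous_iff.1 hguc δ hδ0
  obtain ⟨k₀, hk₀⟩ := exists_nat_one_div_lt hη
  set k := k₀ + 1 with hkdef
  have hk : 0 < k := Nat.succ_pos _
  have hk' : (0 : ℝ) < k := by exact_mod_cast hk
  have hkη : 1 / (k : ℝ) < η := by rw [hkdef]; exact_mod_cast hk₀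
  let p : (Fin N → Fin k) → Fin N → ℝ := fun i j => ((i j : ℕ) : ℝ) / k - 1 / 2
  let ζ : (Fin N → Fin k) → Mat d N := fun i => ξ + g (WithLp.toLp 2 (p i))
  have hev : ∀ᶠ n : ℕ in atTop, ∀ i, tanCell f M s (ζ i) n < Tfhom f M s (ζ i) + δ := by
    rw [eventually_all]
    intro i
    exact tendsto_natCast_atTop_atTop.eventually
      (hom_eventually hf hV (ζ i) (lt_add_of_pos_right _ hδ0))
  obtain ⟨n, hn, hn0⟩ := (hev.and (eventually_gt_atTop 0)).exists
  have hn' : (0 : ℝ) < n := by exact_mod_cast hn0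
  have hWint := hom_int hf hV ξ hφ (M := M) (s := s)
  have hdint : IntegrableOn (fun y => ‖fderiv ℝ φ y - g y‖) (unitCube N) :=
    (hDint.sub hgint).norm
  have hcI : ∀ c : ℝ, IntegrableOn (fun _ : EN N => c) (unitCube N) := fun c =>
    integrableOn_const (volume_unitCube_ne_top N)
  have hrest : IntegrableOn (fun y => δ + 2 * L * δ + 2 * L * ‖fderiv ℝ φ y - g y‖) (unitCube N) :=
    (hcI _).add (hdint.const_mul _)
  have hT : (0 : ℝ) < ((k * n : ℕ) : ℝ) := by exact_mod_cast Nat.mul_pos hk hn0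
  have hkey := key hf hV hk hn0 ξ hφ hφT hφ0 ζ (fun i => Tfhom f M s (ζ i) + δ) hn
    (G := fun y => Tfhom f M s (ξ + fderiv ℝ φ y) +
      (δ + 2 * L * δ + 2 * L * ‖fderiv ℝ φ y - g y‖)) (hWint.add hrest) (by
      intro i x hx
      set y := (((k * n : ℕ) : ℝ))⁻¹ • x - halfVec N with hy
      have h1 := hom_lip hf hV (ζ i) (ξ + fderiv ℝ φ y) (M := M) (s := s)
      rw [norm_sub_rev] at h1
      have h2 : ‖g y - g (WithLp.toLp 2 (p i))‖ ≤ δ := by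
        rw [← dist_eq_norm]
        refine (hguc (a := WithLp.ofLp y) (b := p i) ?_).le
        rw [dist_pi_lt_iff hη]
        intro j
        refine lt_of_le_of_lt ?_ hkη
        have hxj := hx j
        simp only [cor, PiLp.sub_apply, mem_Ioo] at hxj
        have hyj : y j - p i j = ((((k * n : ℕ) : ℝ))⁻¹) * (x j - ((n * (i j : ℕ) : ℕ) : ℝ)) := by
          simp only [hy, halfVec, p, PiLp.sub_apply, PiLp.smul_apply, smul_eq_mul]
          push_cast
          field_simp
          ring
        rw [Real.dist_eq]
        change |y j - p i j| ≤ _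
        rw [hyj, abs_mul, abs_of_pos (inv_pos.2 hT), abs_of_pos hxj.1,
          inv_mul_le_iff₀ hT]
        have : (((k * n : ℕ) : ℝ)) * (1 / k) = n := by push_cast; field_simp
        rw [this]
        exact hxj.2.le
      have h3 : ‖ξ + fderiv ℝ φ y - ζ i‖ ≤ ‖fderiv ℝ φ y - g y‖ + δ := by
        have : ξ + fderiv ℝ φ y - ζ i =
            (fderiv ℝ φ y - g y) + (g y - g (WithLp.toLp 2 (p i))) := by
          simp only [ζ]; abel
        rw [this]
        exact (norm_add_le _ _).trans (by gcongr)
      have h4 := mul_le_mul_of_nonneg_left h3 hL.le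
      linarith)
  have hfin := (hom_le_cell hf hV ξ (Nat.mul_pos hk hn0)).trans hkey
  rw [integral_add hWint hrest, integral_add (hcI _) (hdint.const_mul _),
    integral_const_unitCube, integral_const_mul] at hfin
  have h5 : 2 * L * ∫ y in unitCube N, ‖fderiv ℝ φ y - g y‖ ≤ 2 * L * δ := by gcongr
  have h6 : δ * (1 + 4 * L) = ε := by rw [hδ]; field_simp
  linarith

end Hom


/-! ### Rank-one convexity -/

/-- The sawtooth profile with slopes `1 - θ` and `-θ`. -/
noncomputable def saw (θ r : ℝ) : ℝ := min ((1 - θ) * Int.fract r) (θ * (1 - Int.fract r))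

theorem saw_nonneg {θ : ℝ} (h0 : 0 ≤ θ) (h1 : θ ≤ 1) (r : ℝ) : 0 ≤ saw θ r := by
  have a := Int.fract_nonneg r
  have b := (Int.fract_lt_one r).le
  exact le_min (mul_nonneg (by linarith) a) (mul_nonneg h0 (by linarith))

theorem saw_le_fract {θ : ℝ} (h0 : 0 ≤ θ) (r : ℝ) : saw θ r ≤ Int.fract r := by
  have a := Int.fract_nonneg r
  refine (min_le_left _ _).trans ?_
  nlinarith

theorem saw_le_sub {θ : ℝ} (h1 : θ ≤ 1) (r : ℝ) : saw θ r ≤ 1 - Int.fract r := by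
  have b := (Int.fract_lt_one r).le
  refine (min_le_right _ _).trans ?_
  nlinarith

theorem saw_le_one {θ : ℝ} (h0 : 0 ≤ θ) (r : ℝ) : saw θ r ≤ 1 :=
  (saw_le_fract h0 r).trans (Int.fract_lt_one r).le

theorem saw_lip_aux {θ : ℝ} (h0 : 0 ≤ θ) (h1 : θ ≤ 1) {r t : ℝ} (hrt : r ≤ t) :
    |saw θ r - saw θ t| ≤ t - r := by
  rcases (Int.floor_mono hrt).eq_or_lt with h | h
  · have e1 : Int.fract r = r - ⌊r⌋ := rfl
    have e2 : Int.fract t = t - ⌊r⌋ := by rw [h]; rfl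
    refine (abs_min_sub_min_le_max _ _ _ _).trans (max_le ?_ ?_)
    · rw [e1, e2, abs_le]
      constructor <;> nlinarith
    · rw [e1, e2, abs_le]
      constructor <;> nlinarith
  · have e1 : Int.fract r = r - ⌊r⌋ := rfl
    have e2 : Int.fract t = t - ⌊t⌋ := rfl
    have h' : ((⌊r⌋ : ℤ) : ℝ) + 1 ≤ ((⌊t⌋ : ℤ) : ℝ) := by exact_mod_cast h
    have a1 := saw_nonneg h0 h1 r
    have a2 := saw_nonneg h0 h1 t
    have a3 := saw_le_sub h1 r
    have a4 := saw_le_fract h0 t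
    have b1 := (Int.fract_lt_one r).le
    have b2 := Int.fract_nonneg t
    rw [abs_le]
    constructor <;> linarith

theorem saw_lip {θ : ℝ} (h0 : 0 ≤ θ) (h1 : θ ≤ 1) (r t : ℝ) :
    |saw θ r - saw θ t| ≤ |r - t| := by
  rcases le_total r t with h | h
  · rw [abs_of_nonpos (by linarith : r - t ≤ 0)]
    have := saw_lip_aux h0 h1 h
    linarith
  · rw [abs_of_nonneg (by linarith : 0 ≤ r - t), abs_sub_comm]
    exact saw_lip_aux h0 h1 h

theorem saw_deriv_left {θ : ℝ} (h1 : θ ≤ 1) {r : ℝ} (hr : 0 < Int.fract r)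
    (hr' : Int.fract r < θ) : HasDerivAt (saw θ) (1 - θ) r := by
  have hlin : HasDerivAt (fun x : ℝ => (1 - θ) * (x - ⌊r⌋)) (1 - θ) r := by
    simpa using ((hasDerivAt_id r).sub_const (⌊r⌋ : ℝ)).const_mul (1 - θ)
  refine hlin.congr_of_eventuallyEq ?_
  have e1 : Int.fract r = r - ⌊r⌋ := rfl
  filter_upwards [Ioo_mem_nhds (a := (⌊r⌋ : ℝ)) (b := ⌊r⌋ + θ) (by linarith) (by linarith)]
    with x hx
  have hf : ⌊x⌋ = ⌊r⌋ := Int.floor_eq_iff.2 ⟨hx.1.le, by linarith [hx.2]⟩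
  have e2 : Int.fract x = x - ⌊r⌋ := by rw [← hf]; rfl
  have := hx.2
  rw [saw, e2, min_eq_left]
  nlinarith

theorem saw_deriv_right {θ : ℝ} (h0 : 0 ≤ θ) {r : ℝ} (hr : θ < Int.fract r) :
    HasDerivAt (saw θ) (-θ) r := by
  have hlin : HasDerivAt (fun x : ℝ => θ * (1 - (x - ⌊r⌋))) (-θ) r := by
    simpa using (((hasDerivAt_id r).sub_const (⌊r⌋ : ℝ)).const_sub 1).const_mul θ
  refine hlin.congr_of_eventuallyEq ?_
  have e1 : Int.fract r = r - ⌊r⌋ := rfl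
  have e3 := Int.fract_lt_one r
  filter_upwards [Ioo_mem_nhds (a := (⌊r⌋ : ℝ) + θ) (b := ⌊r⌋ + 1) (by linarith) (by linarith)]
    with x hx
  have hf : ⌊x⌋ = ⌊r⌋ := Int.floor_eq_iff.2 ⟨by linarith [hx.1], hx.2⟩
  have e2 : Int.fract x = x - ⌊r⌋ := by rw [← hf]; rfl
  have := hx.1
  rw [saw, e2, min_eq_right]
  nlinarith

/-- The periodic profile of the density along the laminate. -/
noncomputable def lamF (θ A B C r : ℝ) : ℝ :=
  if 0 < Int.fract r ∧ Int.fract r < θ then A else if θ < Int.fract r then B else C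

theorem lamF_measurable (θ A B C : ℝ) : Measurable (lamF θ A B C) := by
  unfold lamF
  refine Measurable.ite ?_ measurable_const (Measurable.ite ?_ measurable_const measurable_const)
  · exact (measurableSet_lt measurable_const measurable_fract).inter
      (measurableSet_lt measurable_fract measurable_const)
  · exact measurableSet_lt measurable_const measurable_fract

theorem lamF_periodic (θ A B C : ℝ) : Function.Periodic (lamF θ A B C) 1 := by
  intro x
  simp only [lamF, Int.fract_add_one]

theorem lamF_bound {θ A B C : ℝ} (hA : 0 ≤ A) (hB : 0 ≤ B) (hAC : A ≤ C) (hBC : B ≤ C) (r : ℝ) :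
    0 ≤ lamF θ A B C r ∧ lamF θ A B C r ≤ C := by
  unfold lamF
  split_ifs
  · exact ⟨hA, hAC⟩
  · exact ⟨hB, hBC⟩
  · exact ⟨hA.trans hAC, le_rfl⟩

theorem lamF_intervalIntegrable {θ A B C : ℝ} (hA : 0 ≤ A) (hB : 0 ≤ B) (hAC : A ≤ C)
    (hBC : B ≤ C) (u v : ℝ) : IntervalIntegrable (lamF θ A B C) volume u v := by
  rw [intervalIntegrable_iff]
  refine Measure.integrableOn_of_bounded (M := C) (by simp)
    (lamF_measurable θ A B C).aestronglyMeasurable (ae_of_all _ fun x => ?_)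
  have := lamF_bound (θ := θ) hA hB hAC hBC x
  rw [Real.norm_eq_abs, abs_of_nonneg this.1]
  exact this.2

theorem lamF_integral {θ A B C : ℝ} (h0 : 0 ≤ θ) (h1 : θ ≤ 1) (hA : 0 ≤ A) (hB : 0 ≤ B)
    (hAC : A ≤ C) (hBC : B ≤ C) : ∫ r in (0 : ℝ)..1, lamF θ A B C r = θ * A + (1 - θ) * B := by
  rw [← intervalIntegral.integral_add_adjacent_intervals (b := θ)
    (lamF_intervalIntegrable hA hB hAC hBC _ _) (lamF_intervalIntegrable hA hB hAC hBC _ _)]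
  have i1 : ∫ r in (0 : ℝ)..θ, lamF θ A B C r = θ * A := by
    rw [intervalIntegral.integral_of_le h0, integral_Ioc_eq_integral_Ioo]
    rw [setIntegral_congr_fun (g := fun _ => A) measurableSet_Ioo]
    · simp [h0]
    · intro r hr
      have : Int.fract r = r := Int.fract_eq_self.2 ⟨hr.1.le, hr.2.trans_le h1⟩
      simp only [lamF, this, hr.1, hr.2, and_self, if_true]
  have i2 : ∫ r in θ..1, lamF θ A B C r = (1 - θ) * B := by
    rw [intervalIntegral.integral_of_le h1, integral_Ioc_eq_integral_Ioo]
    rw [setIntegral_congr_fun (g := fun _ => B) measurableSet_Ioo]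
    · simp [h1]
    · intro r hr
      have : Int.fract r = r := Int.fract_eq_self.2 ⟨h0.trans hr.1.le, hr.2⟩
      have h' : ¬ r < θ := not_lt.2 hr.1.le
      simp only [lamF, this, hr.1, h', and_false, if_true, if_false]
  rw [i1, i2]

theorem lamF_shift {θ A B C : ℝ} (h0 : 0 ≤ θ) (h1 : θ ≤ 1) (hA : 0 ≤ A) (hB : 0 ≤ B)
    (hAC : A ≤ C) (hBC : B ≤ C) (c : ℝ) :
    ∫ τ in Ioc (0 : ℝ) 1, lamF θ A B C (c + τ) = θ * A + (1 - θ) * B := by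
  rw [← intervalIntegral.integral_of_le zero_le_one,
    intervalIntegral.integral_comp_add_left (lamF θ A B C) c, add_zero,
    (lamF_periodic θ A B C).intervalIntegral_add_eq c 0, zero_add]
  exact lamF_integral h0 h1 hA hB hAC hBC

section Rank

variable {N d : ℕ} {f : EN N → Mat d N → ℝ} {α β L : ℝ} {M : Set (EN d)} {s : EN d}
  {V : Submodule ℝ (EN d)}

/-- The scalar laminate profile, cut off near the boundary of the cube. -/
noncomputable def lamP (N : ℕ) (θ k τ : ℝ) (w : EN N) (x : EN N) : ℝ :=
  min (k⁻¹ * saw θ (k * ⟪w, x⟫ + τ)) (Metric.infDist x (unitCube N)ᶜ)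

theorem lamP_lip {θ k : ℝ} (h0 : 0 ≤ θ) (h1 : θ ≤ 1) (hk : 0 < k) (τ : ℝ) (w : EN N) :
    LipschitzWith (max ‖w‖₊ 1) (lamP N θ k τ w) := by
  refine LipschitzWith.min ?_ (Metric.lipschitz_infDist_pt _)
  refine LipschitzWith.of_dist_le_mul fun x y => ?_
  rw [Real.dist_eq, ← mul_sub, abs_mul, abs_of_pos (inv_pos.2 hk), inv_mul_le_iff₀ hk]
  refine (saw_lip h0 h1 _ _).trans ?_
  have e : k * ⟪w, x⟫ + τ - (k * ⟪w, y⟫ + τ) = k * ⟪w, x - y⟫ := by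
    rw [inner_sub_right]; ring
  rw [e, abs_mul, abs_of_pos hk, dist_eq_norm]
  gcongr
  exact abs_real_inner_le_norm _ _

theorem lamP_zero {θ k : ℝ} (h0 : 0 ≤ θ) (h1 : θ ≤ 1) (hk : 0 < k) (τ : ℝ) (w : EN N) {x : EN N}
    (hx : x ∉ unitCube N) : lamP N θ k τ w x = 0 := by
  have : Metric.infDist x (unitCube N)ᶜ = 0 := Metric.infDist_zero_of_mem hx
  rw [lamP, this, min_eq_right]
  exact mul_nonneg (inv_pos.2 hk).le (saw_nonneg h0 h1 _)

theorem lamP_fderiv {θ k : ℝ} (h0 : 0 ≤ θ) (hk : 0 < k) (τ : ℝ) (w : EN N) (a : EN d)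
    {x : EN N} (hx : k⁻¹ < Metric.infDist x (unitCube N)ᶜ) {c : ℝ}
    (hc : HasDerivAt (saw θ) c (k * ⟪w, x⟫ + τ)) :
    fderiv ℝ (fun x => lamP N θ k τ w x • a) x =
      c • ContinuousLinearMap.smulRight (innerSL ℝ w) a := by
  have hin : HasFDerivAt (fun x : EN N => k * ⟪w, x⟫ + τ) (k • innerSL ℝ w) x :=
    (((innerSL ℝ w).hasFDerivAt (x := x)).const_mul k).add_const τ
  have h2 := ((hc.comp_hasFDerivAt x hin).const_mul k⁻¹).smul_const a
  have h3 : HasFDerivAt (fun x => lamP N θ k τ w x • a)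
      ((k⁻¹ • c • k • innerSL ℝ w).smulRight a) x := by
    refine h2.congr_of_eventuallyEq ?_
    have : ∀ᶠ z in 𝓝 x, k⁻¹ < Metric.infDist z (unitCube N)ᶜ :=
      (Metric.continuous_infDist_pt _).continuousAt.eventually (lt_mem_nhds hx)
    filter_upwards [this] with z hz
    have hle : k⁻¹ * saw θ (k * ⟪w, z⟫ + τ) ≤ Metric.infDist z (unitCube N)ᶜ := by
      refine le_trans ?_ hz.le
      exact mul_le_of_le_one_right (inv_pos.2 hk).le (saw_le_one h0 _)
    simp only [lamP, min_eq_left hle, Function.comp]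
  rw [h3.fderiv]
  ext v : 1
  simp only [ContinuousLinearMap.smulRight_apply, ContinuousLinearMap.smul_apply, smul_eq_mul,
    smul_smul]
  congr 1
  field_simp

/-- The boundary layer of width `1/k`. -/
def layer (N : ℕ) (k : ℝ) : Set (EN N) := {x | Metric.infDist x (unitCube N)ᶜ ≤ k⁻¹}

theorem layer_meas (N : ℕ) (k : ℝ) : MeasurableSet (layer N k) :=
  (isClosed_le (Metric.continuous_infDist_pt _) continuous_const).measurableSet

theorem layer_tendsto (hne : (unitCube N)ᶜ.Nonempty) :
    Tendsto (fun n : ℕ => volume.real (layer N ((n : ℝ) + 1) ∩ unitCube N)) atTop (𝓝 0) := by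
  have hQm := (isOpen_unitCube N).measurableSet
  have h := tendsto_measure_iInter_atTop (μ := (volume : Measure (EN N)))
    (s := fun n : ℕ => layer N ((n : ℝ) + 1) ∩ unitCube N)
    (fun n => ((layer_meas N _).inter hQm).nullMeasurableSet) (by
      intro m n hmn x hx
      refine ⟨?_, hx.2⟩
      have h1 : Metric.infDist x (unitCube N)ᶜ ≤ ((n : ℝ) + 1)⁻¹ := hx.1
      refine h1.trans ?_
      have : (m : ℝ) ≤ n := by exact_mod_cast hmn
      gcongr)
    ⟨0, ((measure_mono inter_subset_right).trans_lt
      (volume_unitCube_ne_top N).lt_top).ne⟩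
  have hemp : ⋂ n : ℕ, layer N ((n : ℝ) + 1) ∩ unitCube N = ∅ := by
    rw [eq_empty_iff_forall_notMem]
    intro x hx
    rw [mem_iInter] at hx
    have hpos : 0 < Metric.infDist x (unitCube N)ᶜ :=
      ((isOpen_unitCube N).isClosed_compl.notMem_iff_infDist_pos hne).1 (fun h => h (hx 0).2)
    obtain ⟨n, hn⟩ := exists_nat_one_div_lt hpos
    have : Metric.infDist x (unitCube N)ᶜ ≤ ((n : ℝ) + 1)⁻¹ := (hx n).1
    rw [one_div] at hn
    linarith
  rw [hemp, measure_empty] at h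
  have := (ENNReal.tendsto_toReal ENNReal.zero_ne_top).comp h
  simpa [Measure.real, Function.comp_def] using this

theorem lam_step (hf : StdIntegrand N d f α β L) (hV : TangentSet M s = V) (ξ₀ : Mat d N)
    {a : EN d} (ha : a ∈ V) (w : EN N) {θ k C : ℝ} (h0 : 0 ≤ θ) (h1 : θ ≤ 1) (hk : 0 < k)
    (hC : C = β * (1 + (‖ξ₀‖ + ((‖a‖₊ * max ‖w‖₊ 1 : ℝ≥0) : ℝ)))) {A B : ℝ}
    (hA : A = Tfhom f M s (ξ₀ + (1 - θ) • ContinuousLinearMap.smulRight (innerSL ℝ w) a))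
    (hB : B = Tfhom f M s (ξ₀ + (-θ) • ContinuousLinearMap.smulRight (innerSL ℝ w) a))
    (hAC : A ≤ C) (hBC : B ≤ C) (τ : ℝ) :
    Tfhom f M s ξ₀ ≤ (∫ y in unitCube N, lamF θ A B C (k * ⟪w, y⟫ + τ)) +
      C * volume.real (layer N k ∩ unitCube N) := by
  have hβ : 0 < β := hf.alpha_pos.trans_le hf.alpha_le_beta
  have hQm := (isOpen_unitCube N).measurableSet
  have hA0 : 0 ≤ A := hA ▸ hom_nonneg hf hV _
  have hB0 : 0 ≤ B := hB ▸ hom_nonneg hf hV _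
  have hlip : LipschitzWith (‖a‖₊ * max ‖w‖₊ 1) (fun x => lamP N θ k τ w x • a) := by
    refine LipschitzWith.of_dist_le_mul fun x y => ?_
    have := (lamP_lip h0 h1 hk τ w).dist_le_mul x y
    rw [dist_eq_norm, ← sub_smul, norm_smul, ← dist_eq_norm]
    rw [NNReal.coe_mul, coe_nnnorm, mul_comm, mul_assoc]
    gcongr
  have hq := hom_quasiconvex hf hV ξ₀ hlip (fun x => by rw [hV]; exact V.smul_mem _ ha)
    (fun x hx => by rw [lamP_zero h0 h1 hk τ w hx, zero_smul])
  refine hq.trans ?_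
  have hFint : IntegrableOn (fun y => lamF θ A B C (k * ⟪w, y⟫ + τ)) (unitCube N) := by
    refine Measure.integrableOn_of_bounded (M := C) (volume_unitCube_ne_top N) ?_
      (ae_of_all _ fun x => ?_)
    · refine ((lamF_measurable θ A B C).comp ?_).aestronglyMeasurable
      fun_prop
    · have := lamF_bound (θ := θ) hA0 hB0 hAC hBC (k * ⟪w, x⟫ + τ)
      rw [Real.norm_eq_abs, abs_of_nonneg this.1]
      exact this.2
  have hIint : IntegrableOn ((layer N k).indicator fun _ => C) (unitCube N) :=
    (integrableOn_const (volume_unitCube_ne_top N)).indicator (layer_meas N k)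
  have e : C * volume.real (layer N k ∩ unitCube N) =
      ∫ y in unitCube N, (layer N k).indicator (fun _ => C) y := by
    rw [integral_indicator (layer_meas N k), setIntegral_const,
      measureReal_restrict_apply (layer_meas N k), smul_eq_mul, mul_comm]
  rw [e, ← integral_add hFint hIint]
  refine setIntegral_mono_on (hom_int hf hV ξ₀ hlip) (hFint.add hIint) hQm fun y hy => ?_
  have hb := lamF_bound (θ := θ) hA0 hB0 hAC hBC (k * ⟪w, y⟫ + τ)
  have hWC : Tfhom f M s (ξ₀ + fderiv ℝ (fun x => lamP N θ k τ w x • a) y) ≤ C := by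
    rw [hC]
    refine (hom_le_bound hf hV _).trans ?_
    have := bound_add_fderiv ξ₀ hlip y
    gcongr
  by_cases hl : y ∈ layer N k
  · rw [indicator_of_mem hl]
    linarith
  · rw [indicator_of_notMem hl, add_zero]
    have hl' : k⁻¹ < Metric.infDist y (unitCube N)ᶜ := not_le.1 hl
    unfold lamF
    split_ifs with c1 c2
    · rw [lamP_fderiv h0 hk τ w a hl' (saw_deriv_left h1 c1.1 c1.2), hA]
    · rw [lamP_fderiv h0 hk τ w a hl' (saw_deriv_right h0 c2), hB]
    · exact hWC

theorem lam_avg (hf : StdIntegrand N d f α β L) (hV : TangentSet M s = V) (ξ₀ : Mat d N)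
    {a : EN d} (ha : a ∈ V) (w : EN N) {θ k C : ℝ} (h0 : 0 ≤ θ) (h1 : θ ≤ 1) (hk : 0 < k)
    (hC : C = β * (1 + (‖ξ₀‖ + ((‖a‖₊ * max ‖w‖₊ 1 : ℝ≥0) : ℝ)))) {A B : ℝ}
    (hA : A = Tfhom f M s (ξ₀ + (1 - θ) • ContinuousLinearMap.smulRight (innerSL ℝ w) a))
    (hB : B = Tfhom f M s (ξ₀ + (-θ) • ContinuousLinearMap.smulRight (innerSL ℝ w) a))
    (hAC : A ≤ C) (hBC : B ≤ C) :
    Tfhom f M s ξ₀ ≤ (θ * A + (1 - θ) * B) + C * volume.real (layer N k ∩ unitCube N) := by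
  have hA0 : 0 ≤ A := hA ▸ hom_nonneg hf hV _
  have hB0 : 0 ≤ B := hB ▸ hom_nonneg hf hV _
  have hfinQ : IsFiniteMeasure (volume.restrict (unitCube N)) :=
    ⟨by rw [Measure.restrict_apply_univ]; exact (volume_unitCube_ne_top N).lt_top⟩
  have hI : Integrable (Function.uncurry fun (τ : ℝ) (y : EN N) => lamF θ A B C (k * ⟪w, y⟫ + τ))
      ((volume.restrict (Ioc (0 : ℝ) 1)).prod (volume.restrict (unitCube N))) := by
    refine Integrable.of_bound (C := C) ?_ (ae_of_all _ fun x => ?_)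
    · refine ((lamF_measurable θ A B C).comp
        (f := fun p : ℝ × EN N => k * ⟪w, p.2⟫ + p.1) ?_).aestronglyMeasurable
      fun_prop
    · have := lamF_bound (θ := θ) hA0 hB0 hAC hBC (k * ⟪w, x.2⟫ + x.1)
      rw [Real.norm_eq_abs]
      simp only [Function.uncurry]
      rw [abs_of_nonneg this.1]
      exact this.2
  have hone : ∀ c : ℝ, ∫ _ in Ioc (0 : ℝ) 1, c = c := fun c => by simp
  have hcI : ∀ c : ℝ, Integrable (fun _ : ℝ => c) (volume.restrict (Ioc (0 : ℝ) 1)) :=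
    fun c => integrable_const c
  have hIntegA := hI.integral_prod_left
  simp only [Function.uncurry] at hIntegA
  have hmono := integral_mono (hcI (Tfhom f M s ξ₀)) (hIntegA.add (hcI _)) fun τ =>
    lam_step hf hV ξ₀ ha w h0 h1 hk hC hA hB hAC hBC τ
  simp only [Pi.add_apply] at hmono
  rw [hone, integral_add hIntegA (hcI _), hone, integral_integral_swap hI] at hmono
  simp only [lamF_shift h0 h1 hA0 hB0 hAC hBC] at hmono
  rwa [integral_const_unitCube] at hmono

theorem rank_one (hf : StdIntegrand N d f α β L) (hV : TangentSet M s = V) (ξ₀ : Mat d N)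
    {a : EN d} (ha : a ∈ V) (w : EN N) (hne : (unitCube N)ᶜ.Nonempty)
    {θ : ℝ} (h0 : 0 ≤ θ) (h1 : θ ≤ 1) :
    Tfhom f M s ξ₀ ≤
      θ * Tfhom f M s (ξ₀ + (1 - θ) • ContinuousLinearMap.smulRight (innerSL ℝ w) a) +
      (1 - θ) * Tfhom f M s (ξ₀ + (-θ) • ContinuousLinearMap.smulRight (innerSL ℝ w) a) := by
  have hβ : 0 < β := hf.alpha_pos.trans_le hf.alpha_le_beta
  have hR : ‖ContinuousLinearMap.smulRight (innerSL ℝ w) a‖ ≤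
      ((‖a‖₊ * max ‖w‖₊ 1 : ℝ≥0) : ℝ) := by
    rw [ContinuousLinearMap.norm_smulRight_apply, innerSL_apply_norm, NNReal.coe_mul, mul_comm]
    gcongr
    · simp
    · simp
  have hbd : ∀ c : ℝ, |c| ≤ 1 →
      Tfhom f M s (ξ₀ + c • ContinuousLinearMap.smulRight (innerSL ℝ w) a) ≤
        β * (1 + (‖ξ₀‖ + ((‖a‖₊ * max ‖w‖₊ 1 : ℝ≥0) : ℝ))) := by
    intro c hc
    refine (hom_le_bound hf hV _).trans ?_
    have h2 : ‖c • ContinuousLinearMap.smulRight (innerSL ℝ w) a‖ ≤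
        ((‖a‖₊ * max ‖w‖₊ 1 : ℝ≥0) : ℝ) := by
      rw [norm_smul, Real.norm_eq_abs]
      exact (mul_le_of_le_one_left (norm_nonneg _) hc).trans hR
    have h3 := (norm_add_le ξ₀ (c • ContinuousLinearMap.smulRight (innerSL ℝ w) a)).trans
      (add_le_add_right h2 ‖ξ₀‖)
    gcongr
  have hlim := ((layer_tendsto hne).const_mul
    (β * (1 + (‖ξ₀‖ + ((‖a‖₊ * max ‖w‖₊ 1 : ℝ≥0) : ℝ))))).const_add
    (θ * Tfhom f M s (ξ₀ + (1 - θ) • ContinuousLinearMap.smulRight (innerSL ℝ w) a) +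
      (1 - θ) * Tfhom f M s (ξ₀ + (-θ) • ContinuousLinearMap.smulRight (innerSL ℝ w) a))
  rw [mul_zero, add_zero] at hlim
  refine ge_of_tendsto' hlim fun n => ?_
  exact lam_avg hf hV ξ₀ ha w h0 h1 (by positivity) rfl rfl rfl
    (hbd _ (by rw [abs_le]; constructor <;> linarith))
    (hbd _ (by rw [abs_le]; constructor <;> linarith))

theorem rank_one_final (hf : StdIntegrand N d f α β L) (hV : TangentSet M s = V)
    {ξ ξ' : Mat d N} (hξ : TangentCols M s ξ) (hξ' : TangentCols M s ξ')
    {a : EN d} {w : EN N} (h : ξ - ξ' = ContinuousLinearMap.smulRight (innerSL ℝ w) a)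
    {θ : ℝ} (h0 : 0 ≤ θ) (h1 : θ ≤ 1) :
    Tfhom f M s (θ • ξ + (1 - θ) • ξ') ≤ θ * Tfhom f M s ξ + (1 - θ) * Tfhom f M s ξ' := by
  by_cases hw : w = 0
  · have e : ξ = ξ' := by
      rw [← sub_eq_zero, h, hw]
      ext v
      simp
    have e1 : θ • ξ + (1 - θ) • ξ' = ξ' := by rw [e]; module
    rw [e1, e]
    linarith
  · obtain ⟨j, hj⟩ : ∃ j, w j ≠ 0 := by
      by_contra hcon
      push Not at hcon
      exact hw (by ext j; simpa using hcon j)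
    have ha : a ∈ V := by
      have m1 : ξ (EuclideanSpace.single j 1) ∈ V := by
        have := hξ j; rw [hV] at this; exact this
      have m2 : ξ' (EuclideanSpace.single j 1) ∈ V := by
        have := hξ' j; rw [hV] at this; exact this
      have m3 := V.sub_mem m1 m2
      rw [← ContinuousLinearMap.sub_apply, h] at m3
      have e : ContinuousLinearMap.smulRight (innerSL ℝ w) a (EuclideanSpace.single j 1) =
          w j • a := by
        simp [EuclideanSpace.inner_single_right]
      rw [e] at m3
      exact (V.smul_mem_iff hj).1 m3
    have hne : (unitCube N)ᶜ.Nonempty := by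
      refine ⟨EuclideanSpace.single j 1, fun hx => ?_⟩
      have := (hx j).2
      simp at this
      norm_num at this
    have hr := rank_one hf hV (θ • ξ + (1 - θ) • ξ') ha w hne h0 h1
    rw [← h] at hr
    have e1 : θ • ξ + (1 - θ) • ξ' + (1 - θ) • (ξ - ξ') = ξ := by module
    have e2 : θ • ξ + (1 - θ) • ξ' + (-θ) • (ξ - ξ') = ξ' := by module
    rwa [e1, e2] at hr

end Rank

/-- Tangential quasiconvexity of `Tf_hom`: for every
`s ∈ M`, `ξ ∈ [T_s M]^N` and every `φ ∈ W^{1,∞}_0(Q;T_s M)` one has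
`Tf_hom(s,ξ) ≤ ∫_Q Tf_hom(s,ξ+∇φ)`; in particular `Tf_hom(s,·)` is rank-one
convex on `[T_s M]^N`. -/
theorem statement_6
    (N d : ℕ) (M : Set (EN d)) (hM : IsNiceManifold d M)
    (f : EN N → Mat d N → ℝ) (α β L : ℝ) (hf : StdIntegrand N d f α β L) :
    ∀ s ∈ M, ∀ ξ : Mat d N, TangentCols M s ξ →
      (∀ (φ : EN N → EN d) (K : ℝ≥0), LipschitzWith K φ →
        (∀ x, φ x ∈ TangentSet M s) → (∀ x, x ∉ unitCube N → φ x = 0) →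
        Tfhom f M s ξ ≤ ∫ y in unitCube N, Tfhom f M s (ξ + fderiv ℝ φ y)) ∧
      (∀ ξ' : Mat d N, TangentCols M s ξ' →
        (∃ (a : EN d) (w : EN N),
          ξ - ξ' = ContinuousLinearMap.smulRight (innerSL ℝ w) a) →
        ∀ θ : ℝ, 0 ≤ θ → θ ≤ 1 →
          Tfhom f M s (θ • ξ + (1 - θ) • ξ') ≤
            θ * Tfhom f M s ξ + (1 - θ) * Tfhom f M s ξ') := by
  intro s hs ξ hξ
  obtain ⟨V, hV⟩ := tangentSet_submodule hM hs
  refine ⟨fun φ K hφ hT h0 => hom_quasiconvex hf hV ξ hφ hT h0, ?_⟩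
  rintro ξ' hξ' ⟨a, w, h⟩ θ h0 h1
  exact rank_one_final hf hV hξ hξ' h h0 h1
end
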